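/- arXiv:2203.00098 — 10 statements merged into one kernel-verified Lean document; each statement's English description precedes it below -/
import Mathlib

section
/- For every odd integer p ≥ 5 there exist constants c ∈ (0,1) and C ≥ 1, depending only on p, with the following property: for all integers k₁, …, k_p, with k := k₁ − k₂ + ⋯ + k_p and Φ := k² − k₁² + k₂² − ⋯ − k_p², at least one of the following holds: (A) there is exactly one odd index ℓ with k_ℓ = k; (B) |Φ| ≥ c · k₁*; (C) (k₃*)² ≥ c · k₁* or k₁* ≤ C · k₂*. -/
open scoped BigOperators

lemma core_pos (P N m a b t q s r : ℝ) (hP : 5 ≤ P) (hN : |a| = N) (hm : 0 ≤ m) (hmb : m ≤ |b|)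
    (hs : s = 1 ∨ s = -1) (ht : |t| ≤ P * m) (hq : |q| ≤ P * m ^ 2)
    (h1 : m ^ 2 < 1 / (16 * P ^ 2) * N) (h2 : 16 * P * |b| < N)
    (hr : r = s * b + t) (hr1 : 1 ≤ |r|) :
    1 / (16 * P ^ 2) * N ≤ |(a + r) ^ 2 - (a ^ 2 + s * b ^ 2 + q)| := by
  have hP2 : 0 < 16 * P ^ 2 := by positivity
  have hb := abs_nonneg b
  have hN0 : 0 < N := lt_of_le_of_lt (by positivity) h2
  have h1' : 16 * P ^ 2 * m ^ 2 < N := by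
    rw [one_div, inv_mul_eq_div, lt_div_iff₀ hP2] at h1
    linarith
  have hcN : 1 / (16 * P ^ 2) * N ≤ N := by
    rw [one_div, inv_mul_eq_div, div_le_iff₀ hP2]
    have hP3 : 25 ≤ P ^ 2 := by nlinarith
    nlinarith
  have hsb : |s * b| = |b| := by
    rcases hs with rfl | rfl <;> simp
  have hrb : |r| ≤ N / 8 := by
    have : |r| ≤ |b| + P * m := by
      rw [hr]; exact (abs_add_le _ _).trans (by rw [hsb]; linarith)
    nlinarith
  have ht2 : t ^ 2 ≤ P ^ 2 * m ^ 2 := by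
    rw [← sq_abs t, ← mul_pow]
    exact pow_le_pow_left₀ (abs_nonneg _) ht 2
  have hb2 : b ^ 2 ≤ 2 * r ^ 2 + 2 * t ^ 2 := by
    have : b ^ 2 = (r - t) ^ 2 := by rw [hr]; rcases hs with rfl | rfl <;> ring
    nlinarith [sq_nonneg (r + t)]
  have hsb2 : |s * b ^ 2| = b ^ 2 := by
    rcases hs with rfl | rfl <;> simp
  have hr2 : r ^ 2 ≤ |r| * (N / 8) := by
    rw [← sq_abs r, sq]; exact mul_le_mul_of_nonneg_left hrb (abs_nonneg _)
  have hmain : |r| * (15 / 8 * N) ≤ |r * (2 * a + r)| := by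
    rw [abs_mul]
    apply mul_le_mul_of_nonneg_left _ (abs_nonneg _)
    have := abs_sub_abs_le_abs_sub (2 * a) (-r)
    rw [abs_neg, sub_neg_eq_add, abs_mul, hN, abs_two] at this
    linarith
  have hq' : P * m ^ 2 ≤ N / 80 := by nlinarith [sq_nonneg m, mul_nonneg (by linarith : 0 ≤ P) (sq_nonneg m)]
  have e1 : (a + r) ^ 2 - (a ^ 2 + s * b ^ 2 + q) = r * (2 * a + r) - (s * b ^ 2 + q) := by ring
  rw [e1]
  have h3 := abs_sub_abs_le_abs_sub (r * (2 * a + r)) (s * b ^ 2 + q)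
  have h4 := abs_add_le (s * b ^ 2) q
  nlinarith

lemma core_neg (P N m a b q s k : ℝ) (hP : 5 ≤ P) (hN : |a| = N) (hm : 0 ≤ m) (hmb : m ≤ |b|)
    (hs : s = 1 ∨ s = -1) (hq : |q| ≤ P * m ^ 2)
    (h2 : 16 * P * |b| < N) (hN1 : 1 ≤ N) :
    1 / (16 * P ^ 2) * N ≤ |k ^ 2 - (-a ^ 2 + s * b ^ 2 + q)| := by
  have hP2 : 0 < 16 * P ^ 2 := by positivity
  have hb := abs_nonneg b
  have hcN : 1 / (16 * P ^ 2) * N ≤ N / 2 := by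
    rw [one_div, inv_mul_eq_div, div_le_iff₀ hP2]
    have hP3 : 25 ≤ P ^ 2 := by nlinarith
    nlinarith
  refine le_trans ?_ (le_abs_self _)
  have ha : a ^ 2 = N ^ 2 := by rw [← sq_abs, hN]
  have hsb2 : |s * b ^ 2| = b ^ 2 := by
    rcases hs with rfl | rfl <;> simp
  have h5 := le_abs_self (s * b ^ 2)
  have h6 := le_abs_self q
  have h7 : m ^ 2 ≤ b ^ 2 := by rw [← sq_abs b]; exact pow_le_pow_left₀ hm hmb 2
  have h8 : (16 * P * |b|) ^ 2 ≤ N ^ 2 := pow_le_pow_left₀ (by positivity) h2.le 2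
  rw [mul_pow, sq_abs] at h8
  have h9 : (1 + P) * b ^ 2 ≤ N ^ 2 / 2 := by
    have : 2 * (1 + P) * b ^ 2 ≤ (16 * P) ^ 2 * b ^ 2 :=
      mul_le_mul_of_nonneg_right (by nlinarith) (sq_nonneg b)
    linarith
  nlinarith [sq_nonneg k, mul_le_mul_of_nonneg_left h7 (by linarith : 0 ≤ P)]


/-- Resonant decomposition lemma for the periodic p-NLS (Lemma `General NLS Decomp`):
for every frequency configuration, either exactly one odd-indexed internal frequency equals
the external frequency (Case A), or `|Φ| ≳ k₁*` (Case B), or `(k₃*)² ≳ k₁*` or `k₁* ∼ k₂*`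
(Case C).  Here the decreasing rearrangement `k₁*, k₂*, k₃*` is expressed via an arbitrary
sorting permutation `e`.  Note that paper index `ℓ ∈ {1,…,p}` corresponds to `Fin p`
index `ℓ - 1`, so odd paper indices correspond to even `Fin p` indices. -/
theorem stmt1 (p : ℕ) (hp : Odd p) (hp5 : 5 ≤ p) :
    ∃ c : ℝ, 0 < c ∧ c < 1 ∧ ∃ C : ℝ, 1 ≤ C ∧
      ∀ κ : Fin p → ℤ, ∀ e : Equiv.Perm (Fin p),
        (Antitone fun i => |κ (e i)|) →
        (((Finset.univ.filter fun i : Fin p =>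
              Even (i:ℕ) ∧ κ i = ∑ j : Fin p, (-1:ℤ)^(j:ℕ) * κ j).card = 1)
          ∨ (c * (|κ (e ⟨0, by omega⟩)| : ℝ) ≤
              (|(∑ j : Fin p, (-1:ℤ)^(j:ℕ) * κ j)^2 - ∑ j : Fin p, (-1:ℤ)^(j:ℕ) * (κ j)^2| : ℝ))
          ∨ ((c * (|κ (e ⟨0, by omega⟩)| : ℝ) ≤ ((|κ (e ⟨2, by omega⟩)| : ℝ))^2)
              ∨ ((|κ (e ⟨0, by omega⟩)| : ℝ) ≤ C * (|κ (e ⟨1, by omega⟩)| : ℝ)))) := by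
  have hPr : (5 : ℝ) ≤ p := by exact_mod_cast hp5
  refine ⟨1 / (16 * (p : ℝ) ^ 2), by positivity, ?_, 16 * p, by linarith, ?_⟩
  · rw [div_lt_one (by positivity)]; nlinarith
  intro κ e hanti
  by_contra hcon
  simp only [not_or, not_le] at hcon
  obtain ⟨hA, hB, hC, hD⟩ := hcon
  have hK : ∀ i, i ≠ (⟨0, by omega⟩ : Fin p) → |κ (e i)| ≤ |κ (e ⟨1, by omega⟩)| := by
    intro i hi
    apply hanti
    rw [Fin.le_def]
    have : (i : ℕ) ≠ 0 := fun h => hi (Fin.ext h)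
    simp only; omega
  have hM : ∀ i, i ≠ (⟨0, by omega⟩ : Fin p) → i ≠ (⟨1, by omega⟩ : Fin p) →
      |κ (e i)| ≤ |κ (e ⟨2, by omega⟩)| := by
    intro i hi hi1
    apply hanti
    rw [Fin.le_def]
    have : (i : ℕ) ≠ 0 := fun h => hi (Fin.ext h)
    have : (i : ℕ) ≠ 1 := fun h => hi1 (Fin.ext h)
    simp only; omega
  have hmb : |κ (e ⟨2, by omega⟩)| ≤ |κ (e ⟨1, by omega⟩)| := hK _ (by simp)
  have hK' : ∀ j, j ≠ e ⟨0, by omega⟩ → |κ j| ≤ |κ (e ⟨1, by omega⟩)| := by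
    intro j hj
    have := hK (e.symm j) (fun h => hj (by rw [← h]; simp))
    simpa using this
  have hM' : ∀ j, j ≠ e ⟨0, by omega⟩ → j ≠ e ⟨1, by omega⟩ →
      |κ j| ≤ |κ (e ⟨2, by omega⟩)| := by
    intro j hj hj1
    have := hM (e.symm j) (fun h => hj (by rw [← h]; simp)) (fun h => hj1 (by rw [← h]; simp))
    simpa using this
  have hne : e ⟨1, by omega⟩ ≠ e ⟨0, by omega⟩ := by simp
  generalize e ⟨0, by omega⟩ = i0 at *
  generalize e ⟨1, by omega⟩ = i1 at *
  generalize e ⟨2, by omega⟩ = i2 at *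
  have split : ∀ f : Fin p → ℤ, ∑ j, f j =
      f i0 + (f i1 + ∑ j ∈ (Finset.univ.erase i0).erase i1, f j) := by
    intro f
    rw [Finset.add_sum_erase _ f (by simp [hne]), Finset.add_sum_erase _ f (by simp)]
  have hcard : (((Finset.univ.erase i0).erase i1).card : ℤ) ≤ p := by
    have := Finset.card_le_univ ((Finset.univ.erase i0).erase i1)
    rw [Fintype.card_fin] at this
    exact_mod_cast this
  have bd : ∀ (g : ℤ → ℤ) (M : ℤ), 0 ≤ M → (∀ x, |x| ≤ |κ i2| → |g x| ≤ M) →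
      |∑ j ∈ (Finset.univ.erase i0).erase i1, (-1:ℤ)^(j:ℕ) * g (κ j)| ≤ p * M := by
    intro g M hM0 hg
    refine (Finset.abs_sum_le_sum_abs _ _).trans ?_
    refine (Finset.sum_le_card_nsmul _ _ M ?_).trans ?_
    · intro j hj
      simp only [Finset.mem_erase] at hj
      rw [abs_mul, abs_pow, abs_neg, abs_one, one_pow, one_mul]
      exact hg _ (hM' j hj.2.1 hj.1)
    · rw [nsmul_eq_mul]
      exact mul_le_mul_of_nonneg_right hcard hM0
  have bt := bd (fun x => x) |κ i2| (abs_nonneg _) (fun x hx => hx)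
  have bq := bd (fun x => x ^ 2) (|κ i2| ^ 2) (by positivity)
    (fun x hx => by rw [abs_pow]; exact pow_le_pow_left₀ (abs_nonneg _) hx 2)
  have st := split (fun j => (-1:ℤ)^(j:ℕ) * κ j)
  have sq := split (fun j => (-1:ℤ)^(j:ℕ) * κ j ^ 2)
  generalize (∑ j ∈ (Finset.univ.erase i0).erase i1, (-1:ℤ)^(j:ℕ) * κ j) = t at *
  generalize (∑ j ∈ (Finset.univ.erase i0).erase i1, (-1:ℤ)^(j:ℕ) * κ j ^ 2) = q at *
  have btR : |(t : ℝ)| ≤ p * |(κ i2 : ℝ)| := by exact_mod_cast bt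
  have bqR : |(q : ℝ)| ≤ p * |(κ i2 : ℝ)| ^ 2 := by exact_mod_cast bq
  have hmbR : |(κ i2 : ℝ)| ≤ |(κ i1 : ℝ)| := by exact_mod_cast hmb
  have hN0 : 0 < |(κ i0 : ℝ)| := lt_of_le_of_lt (by positivity) hD
  have hN1 : 1 ≤ |(κ i0 : ℝ)| := by
    have : 0 < |κ i0| := by exact_mod_cast hN0
    exact_mod_cast this
  have hs : ((-1:ℝ)^(i1:ℕ)) = 1 ∨ ((-1:ℝ)^(i1:ℕ)) = -1 := neg_one_pow_eq_or ℝ _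
  have stR : ((∑ j : Fin p, (-1:ℤ)^(j:ℕ) * κ j : ℤ) : ℝ) =
      (-1)^(i0:ℕ) * κ i0 + ((-1)^(i1:ℕ) * κ i1 + t) := by exact_mod_cast st
  have sqR : ((∑ j : Fin p, (-1:ℤ)^(j:ℕ) * κ j ^ 2 : ℤ) : ℝ) =
      (-1)^(i0:ℕ) * κ i0 ^ 2 + ((-1)^(i1:ℕ) * κ i1 ^ 2 + q) := by exact_mod_cast sq
  push_cast at hB stR sqR
  rw [stR, sqR] at hB
  rcases Nat.even_or_odd (i0 : ℕ) with he | ho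
  · rw [he.neg_one_pow, one_mul] at st
    rw [he.neg_one_pow, one_mul, one_mul] at hB
    by_cases hr : (-1)^(i1:ℕ) * κ i1 + t = 0
    · rw [hr, add_zero] at st
      apply hA
      rw [st, Finset.card_eq_one]
      refine ⟨i0, ?_⟩
      ext j
      simp only [Finset.mem_filter, Finset.mem_univ, true_and, Finset.mem_singleton]
      constructor
      · rintro ⟨-, hj⟩
        by_contra hj0
        have := hK' j hj0
        rw [hj] at this
        have : |(κ i0 : ℝ)| ≤ |(κ i1 : ℝ)| := by exact_mod_cast this
        nlinarith [abs_nonneg (κ i1 : ℝ)]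
      · rintro rfl; exact ⟨he, rfl⟩
    · have hr1 : (1:ℝ) ≤ |(-1)^(i1:ℕ) * (κ i1 : ℝ) + t| := by
        have : 1 ≤ |(-1)^(i1:ℕ) * κ i1 + t| := Int.one_le_abs hr
        exact_mod_cast this
      have := core_pos p _ |(κ i2:ℝ)| (κ i0) (κ i1) t q _ _ hPr rfl (abs_nonneg _) hmbR hs btR bqR
        hC hD rfl hr1
      rw [add_assoc] at this
      linarith
  · rw [ho.neg_one_pow] at hB
    have := core_neg p _ |(κ i2:ℝ)| (κ i0) (κ i1) q _
      (-1 * (κ i0:ℝ) + ((-1)^(i1:ℕ) * (κ i1:ℝ) + t)) hPr rfl (abs_nonneg _) hmbR hs bqR hD hN1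
    rw [add_assoc, ← neg_one_mul ((κ i0:ℝ)^2)] at this
    linarith
end

section
/- Let p ≥ 5 be odd and let k₁, …, k_p be integers with k := k₁ − k₂ + ⋯ + k_p and Φ := k² − k₁² + k₂² − ⋯ − k_p². Assume |k₁| ≥ |k_i| for all i, that k ≠ k₁, and that (p−1)(k₂* + (k₂*)²) ≤ |k₁|. Then |Φ| ≥ |k₁|. -/
open scoped BigOperators

/-- Case B of the resonant decomposition: if `|k₁|` is the largest frequency, the
configuration is nonresonant in the sense `k ≠ k₁`, and the second largest frequency `k₂*`
satisfies `(p−1)(k₂* + (k₂*)²) ≤ |k₁|`, then `|Φ| ≥ |k₁|`.  Here `k₂*` is pinned down as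
the maximum of `|κ i|` over `i ≠ 0` (an upper bound that is attained). -/
theorem stmt2 (p : ℕ) (hp : Odd p) (hp5 : 5 ≤ p)
    (κ : Fin p → ℤ) (k2 : ℤ)
    (hmax : ∀ i, |κ i| ≤ |κ ⟨0, by omega⟩|)
    (hk2ub : ∀ i, i ≠ (⟨0, by omega⟩ : Fin p) → |κ i| ≤ k2)
    (hk2mem : ∃ i, i ≠ (⟨0, by omega⟩ : Fin p) ∧ |κ i| = k2)
    (hne : (∑ j : Fin p, (-1:ℤ)^(j:ℕ) * κ j) ≠ κ ⟨0, by omega⟩)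
    (hsmall : ((p:ℤ) - 1) * (k2 + k2^2) ≤ |κ ⟨0, by omega⟩|) :
    |κ ⟨0, by omega⟩| ≤
      |(∑ j : Fin p, (-1:ℤ)^(j:ℕ) * κ j)^2 - ∑ j : Fin p, (-1:ℤ)^(j:ℕ) * (κ j)^2| := by
  obtain ⟨n, rfl⟩ : ∃ n, p = n + 1 := ⟨p - 1, by omega⟩
  have h0 : (⟨0, by omega⟩ : Fin (n + 1)) = 0 := rfl
  simp only [h0] at *
  have hb : ∀ i : Fin n, |κ i.succ| ≤ k2 := fun i => hk2ub _ (Fin.succ_ne_zero i)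
  have e1 : (∑ j : Fin (n + 1), (-1:ℤ)^(j:ℕ) * κ j)
      = κ 0 + ∑ j : Fin n, (-1:ℤ)^((j.succ : Fin (n + 1)) : ℕ) * κ j.succ := by
    rw [Fin.sum_univ_succ]; simp
  have e2 : (∑ j : Fin (n + 1), (-1:ℤ)^(j:ℕ) * (κ j)^2)
      = (κ 0)^2 + ∑ j : Fin n, (-1:ℤ)^((j.succ : Fin (n + 1)) : ℕ) * (κ j.succ)^2 := by
    rw [Fin.sum_univ_succ]; simp
  have b1 : |∑ j : Fin n, (-1:ℤ)^((j.succ : Fin (n + 1)) : ℕ) * κ j.succ| ≤ n * k2 := by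
    refine (Finset.abs_sum_le_sum_abs _ _).trans ?_
    refine (Finset.sum_le_card_nsmul _ _ k2 fun i _ => ?_).trans (by simp)
    rw [abs_mul, abs_pow]; simpa using hb i
  have b2 : |∑ j : Fin n, (-1:ℤ)^((j.succ : Fin (n + 1)) : ℕ) * (κ j.succ)^2| ≤ n * k2^2 := by
    refine (Finset.abs_sum_le_sum_abs _ _).trans ?_
    refine (Finset.sum_le_card_nsmul _ _ (k2^2) fun i _ => ?_).trans (by simp)
    rw [abs_mul, abs_pow, abs_pow]
    simpa using pow_le_pow_left₀ (abs_nonneg _) (hb i) 2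
  rw [e1] at hne
  rw [e1, e2]
  generalize (∑ j : Fin n, (-1:ℤ)^((j.succ : Fin (n + 1)) : ℕ) * κ j.succ) = m at *
  generalize (∑ j : Fin n, (-1:ℤ)^((j.succ : Fin (n + 1)) : ℕ) * (κ j.succ)^2) = S at *
  generalize κ 0 = a at *
  have hm : 1 ≤ |m| := Int.one_le_abs (by rintro rfl; simp at hne)
  push_cast at hsmall
  have e3 : (a + m)^2 - (a^2 + S) = m * (2 * a + m) - S := by ring
  rw [e3]
  have t1 : |m * (2 * a + m)| - |S| ≤ |m * (2 * a + m) - S| := abs_sub_abs_le_abs_sub _ _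
  have t2 : 2 * |a| - |m| ≤ |2 * a + m| := by
    have := abs_sub_abs_le_abs_sub (2 * a) (-m)
    simpa [abs_mul] using this
  have t3 : |2 * a + m| ≤ |m * (2 * a + m)| := by
    rw [abs_mul]; exact le_mul_of_one_le_left (abs_nonneg _) hm
  linarith
end

section
/- Let p ≥ 5 be odd and let k₁, …, k_p be integers with k := k₁ − k₂ + ⋯ + k_p and Φ := k² − k₁² + k₂² − ⋯ − k_p². If the maximum of |k₁|, …, |k_p| is attained at an even index (i.e. |k_{i₀}| = k₁* for some even i₀), then Φ ≥ k² + (k₁*)² − p·(k₂*)². In particular, if moreover p·(k₂*)² ≤ (k₁*)²/2, then Φ ≥ (k₁*)²/2. -/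
open scoped BigOperators

/-- If the largest frequency is attained at an even paper index (i.e. an odd `Fin p` index
`i0`, since paper index `ℓ` corresponds to `Fin p` index `ℓ - 1`), then
`Φ ≥ k² + (k₁*)² − p (k₂*)²`; in particular if moreover `p (k₂*)² ≤ (k₁*)²/2` then
`Φ ≥ (k₁*)²/2`.  Here `k₂*` is pinned down as the attained maximum of `|κ i|` over `i ≠ i0`. -/
theorem stmt3 (p : ℕ) (hp : Odd p) (hp5 : 5 ≤ p)
    (κ : Fin p → ℤ) (i0 : Fin p) (hi0 : Odd (i0:ℕ))
    (hmax : ∀ i, |κ i| ≤ |κ i0|)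
    (k2 : ℤ)
    (hk2ub : ∀ i, i ≠ i0 → |κ i| ≤ k2)
    (hk2mem : ∃ i, i ≠ i0 ∧ |κ i| = k2) :
    ((∑ j : Fin p, (-1:ℤ)^(j:ℕ) * κ j)^2 - ∑ j : Fin p, (-1:ℤ)^(j:ℕ) * (κ j)^2
        ≥ (∑ j : Fin p, (-1:ℤ)^(j:ℕ) * κ j)^2 + (κ i0)^2 - (p:ℤ) * k2^2)
    ∧ ((p:ℝ) * (k2:ℝ)^2 ≤ (κ i0 : ℝ)^2 / 2 →
        (((∑ j : Fin p, (-1:ℤ)^(j:ℕ) * κ j)^2 - ∑ j : Fin p, (-1:ℤ)^(j:ℕ) * (κ j)^2 : ℤ) : ℝ)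
          ≥ (κ i0 : ℝ)^2 / 2) := by
  have hsum : ∑ j : Fin p, (-1:ℤ)^(j:ℕ) * (κ j)^2 ≤ -(κ i0)^2 + (p:ℤ) * k2^2 := by
    rw [← Finset.add_sum_erase _ _ (Finset.mem_univ i0), hi0.neg_one_pow]
    have h1 : ∑ j ∈ Finset.univ.erase i0, (-1:ℤ)^(j:ℕ) * (κ j)^2
        ≤ ∑ j ∈ Finset.univ.erase i0, k2^2 := by
      apply Finset.sum_le_sum
      intro j hj
      have h2 : (κ j)^2 ≤ k2^2 := sq_le_sq.mpr
        ((hk2ub j (Finset.ne_of_mem_erase hj)).trans (le_abs_self _))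
      rcases neg_one_pow_eq_or ℤ (j:ℕ) with h | h <;> rw [h] <;> nlinarith [sq_nonneg (κ j)]
    have h3 : ∑ j ∈ (Finset.univ : Finset (Fin p)).erase i0, k2^2
        ≤ ∑ j : Fin p, k2^2 :=
      Finset.sum_le_sum_of_subset_of_nonneg (Finset.erase_subset _ _)
        (fun _ _ _ => sq_nonneg _)
    have h4 : ∑ j : Fin p, k2^2 = (p:ℤ) * k2^2 := by simp
    linarith
  have hmain : (∑ j : Fin p, (-1:ℤ)^(j:ℕ) * κ j)^2 - ∑ j : Fin p, (-1:ℤ)^(j:ℕ) * (κ j)^2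
        ≥ (∑ j : Fin p, (-1:ℤ)^(j:ℕ) * κ j)^2 + (κ i0)^2 - (p:ℤ) * k2^2 := by
    linarith
  refine ⟨hmain, fun h => ?_⟩
  have h5 : (κ i0)^2 - (p:ℤ) * k2^2 ≤ (∑ j : Fin p, (-1:ℤ)^(j:ℕ) * κ j)^2
      - ∑ j : Fin p, (-1:ℤ)^(j:ℕ) * (κ j)^2 := by
    linarith [sq_nonneg (∑ j : Fin p, (-1:ℤ)^(j:ℕ) * κ j)]
  have h6 := (Int.cast_le (R := ℝ)).mpr h5
  have h7 : (((κ i0)^2 - (p:ℤ) * k2^2 : ℤ) : ℝ) = (κ i0 : ℝ)^2 - (p:ℝ) * (k2:ℝ)^2 := by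
    push_cast; rfl
  rw [h7] at h6
  linarith
end

section
/- For every odd integer p ≥ 5 there exist constants δ ∈ (0,1) and c > 0, depending only on p, with the following property. Let k₁, …, k_p be integers with k := k₁ − k₂ + ⋯ + k_p and Φ := k² − k₁² + k₂² − ⋯ − k_p². Suppose |k₁| ≥ |k_i| for all i (so k₁* = |k₁|), |k₂| ≥ |k_i| for all i ≠ 1 (so k₂* = |k₂|), and that |k₂| ≤ δ|k₁|, (k₃*)² ≤ δ|k₁|, and |k₁| ≤ k₂². Then |Φ| ≥ c · k₂². -/
open scoped BigOperators

theorem core_real (P K1 K2 r s T : ℝ) (hP : 1 ≤ P) (hT : 0 ≤ T) (hr : |r| ≤ P * T)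
    (hs : |s| ≤ P * T ^ 2) (h1 : |K2| ≤ 1 / (16 * P ^ 2) * |K1|)
    (h2 : T ^ 2 ≤ 1 / (16 * P ^ 2) * |K1|) (h3 : |K1| ≤ K2 ^ 2) (hK : 1 ≤ |K2|) :
    1 / 2 * K2 ^ 2 ≤ |(K1 - K2 + r) ^ 2 - (K1 ^ 2 - K2 ^ 2 + s)| := by
  have hP2 : 1 ≤ P ^ 2 := by nlinarith
  have e1 : 16 * P ^ 2 * |K2| ≤ |K1| := by
    rw [one_div, ← div_eq_inv_mul, le_div_iff₀ (by positivity)] at h1; linarith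
  have e2 : 16 * P ^ 2 * T ^ 2 ≤ |K1| := by
    rw [one_div, ← div_eq_inv_mul, le_div_iff₀ (by positivity)] at h2; linarith
  have hr2 : r ^ 2 ≤ P ^ 2 * T ^ 2 := by
    rw [← sq_abs r, ← mul_pow]; exact pow_le_pow_left₀ (abs_nonneg _) hr 2
  have hs2 : |s| ≤ P ^ 2 * T ^ 2 :=
    hs.trans (mul_le_mul_of_nonneg_right (by nlinarith) (by positivity))
  have e3 : 16 * |K2| ≤ |K1| := by nlinarith
  have hr3 : |r| ≤ |K2| / 4 := by
    apply abs_le_of_sq_le_sq' _ (by positivity) |> fun h => abs_le.2 h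
    rw [div_pow, sq_abs]; linarith
  have f1 : 15 / 16 * |K1| ≤ |K1 - K2| := by
    have := abs_sub_abs_le_abs_sub K1 K2; linarith
  have f2 : 3 / 4 * |K2| ≤ |r - K2| := by
    have := abs_sub_abs_le_abs_sub K2 r; rw [abs_sub_comm] at this; linarith
  have f3 : (15 / 16 * |K1|) * (3 / 4 * |K2|) ≤ |K1 - K2| * |r - K2| :=
    mul_le_mul f1 f2 (by positivity) (by positivity)
  have f4 : |r ^ 2 - s| ≤ 1 / 8 * |K1| := by
    have := abs_sub (r ^ 2) s
    rw [abs_of_nonneg (sq_nonneg r)] at this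
    linarith
  have e : (K1 - K2 + r) ^ 2 - (K1 ^ 2 - K2 ^ 2 + s)
      = 2 * ((K1 - K2) * (r - K2)) - -(r ^ 2 - s) := by ring
  have f5 := abs_sub_abs_le_abs_sub (2 * ((K1 - K2) * (r - K2))) (-(r ^ 2 - s))
  rw [← e, abs_neg, abs_mul, abs_mul, abs_two] at f5
  have f6 : |K1| ≤ |K1| * |K2| := le_mul_of_one_le_right (abs_nonneg _) hK
  have f7 : K2 ^ 2 ≤ |K1| * |K2| := by rw [← sq_abs]; nlinarith [abs_nonneg K2]
  linarith

/-- In the regime where `|k₁|` is dominant, `k₂* = |k₂| ≤ δ|k₁|`, `(k₃*)² ≤ δ|k₁|`, and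
`|k₁| ≤ k₂²`, the phase satisfies `|Φ| ≥ c k₂²`.  Here `k₃*` is pinned down as the attained
maximum of `|κ i|` over `i ∉ {0, 1}` (`Fin p` indices `0, 1` correspond to paper `k₁, k₂`). -/
theorem stmt4 (p : ℕ) (hp : Odd p) (hp5 : 5 ≤ p) :
    ∃ δ : ℝ, 0 < δ ∧ δ < 1 ∧ ∃ c : ℝ, 0 < c ∧
      ∀ κ : Fin p → ℤ, ∀ k3 : ℤ,
        (∀ i, |κ i| ≤ |κ ⟨0, by omega⟩|) →
        (∀ i, i ≠ (⟨0, by omega⟩ : Fin p) → |κ i| ≤ |κ ⟨1, by omega⟩|) →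
        (∀ i, i ≠ (⟨0, by omega⟩ : Fin p) → i ≠ (⟨1, by omega⟩ : Fin p) → |κ i| ≤ k3) →
        (∃ i, i ≠ (⟨0, by omega⟩ : Fin p) ∧ i ≠ (⟨1, by omega⟩ : Fin p) ∧ |κ i| = k3) →
        ((|κ ⟨1, by omega⟩| : ℝ) ≤ δ * (|κ ⟨0, by omega⟩| : ℝ)) →
        ((k3:ℝ)^2 ≤ δ * (|κ ⟨0, by omega⟩| : ℝ)) →
        (|κ ⟨0, by omega⟩| ≤ (κ ⟨1, by omega⟩)^2) →
        c * (κ ⟨1, by omega⟩ : ℝ)^2 ≤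
          (|(∑ j : Fin p, (-1:ℤ)^(j:ℕ) * κ j)^2
            - ∑ j : Fin p, (-1:ℤ)^(j:ℕ) * (κ j)^2| : ℝ) := by
  obtain ⟨n, rfl⟩ : ∃ n, p = n + 2 := ⟨p - 2, by omega⟩
  have hP : (1:ℝ) ≤ ((n + 2 : ℕ) : ℝ) := by push_cast; linarith [(Nat.cast_nonneg n : (0:ℝ) ≤ n)]
  refine ⟨1 / (16 * ((n + 2 : ℕ) : ℝ) ^ 2), by positivity, ?_, 1 / 2, by norm_num, ?_⟩
  · rw [div_lt_one (by positivity)]; nlinarith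
  intro κ k3 h0 h1 h2 h3 h4 h5 h6
  by_cases hz : κ ⟨1, by omega⟩ = 0
  · rw [hz]; simp
  have hT : 0 ≤ k3 := by
    obtain ⟨i, -, -, hi⟩ := h3
    rw [← hi]; exact abs_nonneg _
  have hb : ∀ i : Fin n, |κ i.succ.succ| ≤ k3 := fun i => h2 _
    (by simp [Fin.ext_iff]) (by simp [Fin.ext_iff])
  have hn : (n : ℝ) ≤ ((n + 2 : ℕ) : ℝ) := by push_cast; linarith
  have hT' : (0:ℝ) ≤ k3 := by exact_mod_cast hT
  have hr : |∑ i : Fin n, (-1:ℤ) ^ (i:ℕ) * κ i.succ.succ| ≤ n * k3 := by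
    refine (Finset.abs_sum_le_sum_abs _ _).trans ?_
    refine (Finset.sum_le_card_nsmul _ _ k3 fun i _ => ?_).trans (by simp)
    rw [abs_mul]; simpa using hb i
  have hs : |∑ i : Fin n, (-1:ℤ) ^ (i:ℕ) * κ i.succ.succ ^ 2| ≤ n * k3 ^ 2 := by
    refine (Finset.abs_sum_le_sum_abs _ _).trans ?_
    refine (Finset.sum_le_card_nsmul _ _ (k3 ^ 2) fun i _ => ?_).trans (by simp)
    rw [abs_mul, abs_pow (κ _)]
    simpa using pow_le_pow_left₀ (abs_nonneg _) (hb i) 2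
  have hr' : |((∑ i : Fin n, (-1:ℤ) ^ (i:ℕ) * κ i.succ.succ : ℤ) : ℝ)| ≤ ((n + 2 : ℕ) : ℝ) * k3 :=
    le_trans (by exact_mod_cast hr) (mul_le_mul_of_nonneg_right hn hT')
  have hs' : |((∑ i : Fin n, (-1:ℤ) ^ (i:ℕ) * κ i.succ.succ ^ 2 : ℤ) : ℝ)|
      ≤ ((n + 2 : ℕ) : ℝ) * (k3:ℝ) ^ 2 :=
    le_trans (by exact_mod_cast hs) (mul_le_mul_of_nonneg_right hn (by positivity))
  have key := core_real _ _ _ _ _ _ hP hT' hr' hs' h4 h5 (by exact_mod_cast h6)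
    (by exact_mod_cast Int.one_le_abs hz)
  convert key using 3
  · rw [Fin.sum_univ_succ, Fin.sum_univ_succ]
    simp [pow_succ]
    ring_nf
  · rw [Fin.sum_univ_succ, Fin.sum_univ_succ]
    simp [pow_succ]
    ring_nf
end

section
/- Let p ≥ 5 be odd, s > (p−3)/(2(p−1)), and 0 < ε < min((p−1)s − (p−3)/2, 1). For k ∈ ℤ let S_k denote the set of tuples (k₁,…,k_p) ∈ ℤ^p with k = k₁ − k₂ + ⋯ + k_p, |k₁| ≥ 2p · max_{2≤i≤p}|k_i|, and |Φ| ≥ max(|k|,1), where Φ := k² − k₁² + k₂² − ⋯ − k_p². For a : ℤ → ℂ with ‖a‖_{h^s} < ∞, define (Ta)(k) := Σ_{(k₁,…,k_p)∈S_k} ( ∏_{i odd} a(k_i) · ∏_{i even} conj(a(k_i)) ) / Φ. Then this series converges absolutely for every k, and there is a constant C depending only on p, s, ε such that ‖Ta‖_{h^{s+ε}} ≤ C ‖a‖_{h^s}^p. -/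
open scoped BigOperators

/-- The alternating sum `k₁ − k₂ + k₃ − ⋯ + k_p` (Fin index `j` ↔ paper index `j+1`). -/
def altSum (p : ℕ) (κ : Fin p → ℤ) : ℤ := ∑ j : Fin p, (-1:ℤ)^(j:ℕ) * κ j

/-- The alternating sum of squares `k₁² − k₂² + ⋯ + k_p²`, so that
`Φ = k² − altSq` for `k = altSum`. -/
def altSq (p : ℕ) (κ : Fin p → ℤ) : ℤ := ∑ j : Fin p, (-1:ℤ)^(j:ℕ) * (κ j)^2

/-- The nonresonant region with one dominant odd-indexed frequency:
`k = k₁ − k₂ + ⋯ + k_p`, `|k₁| ≥ 2p·max_{2 ≤ i ≤ p}|k_i|` and `|Φ| ≥ max(|k|, 1)`. -/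
def NRSet (p : ℕ) (hp : 0 < p) (k : ℤ) : Set (Fin p → ℤ) :=
  {κ | altSum p κ = k ∧ (∀ i, i ≠ (⟨0, hp⟩ : Fin p) → 2 * (p:ℤ) * |κ i| ≤ |κ ⟨0, hp⟩|)
      ∧ max |k| 1 ≤ |k^2 - altSq p κ|}

/-- The alternating product `∏_{i odd} a(k_i) ∏_{i even} conj a(k_i)` (paper indexing). -/
noncomputable def nfProd (p : ℕ) (a : ℤ → ℂ) (κ : Fin p → ℤ) : ℂ :=
  ∏ i : Fin p, if Even (i:ℕ) then a (κ i) else (starRingEnd ℂ) (a (κ i))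

/-- A single term of the normal-form operator `T`: the alternating product divided by `Φ`. -/
noncomputable def nfTerm (p : ℕ) (a : ℤ → ℂ) (k : ℤ) (κ : Fin p → ℤ) : ℂ :=
  nfProd p a κ / ((k^2 - altSq p κ : ℤ) : ℂ)


open scoped ENNReal

lemma nf_cs {ι : Type*} (t u v : ι → ℝ≥0∞) (h : ∀ i, t i ^ 2 ≤ u i * v i) :
    (∑' i, t i) ^ 2 ≤ (∑' i, u i) * ∑' i, v i := by
  let _ : MeasurableSpace ι := ⊤
  have h1 : ∀ i, t i ≤ u i ^ (1/2:ℝ) * v i ^ (1/2:ℝ) := by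
    intro i
    rw [← ENNReal.mul_rpow_of_nonneg _ _ (by norm_num : (0:ℝ) ≤ 1/2)]
    calc t i = (t i ^ 2) ^ (1/2:ℝ) := by
          rw [← ENNReal.rpow_natCast, ← ENNReal.rpow_mul]; norm_num
      _ ≤ _ := ENNReal.rpow_le_rpow (h i) (by norm_num)
  have h2 := ENNReal.lintegral_mul_le_Lp_mul_Lq (MeasureTheory.Measure.count : MeasureTheory.Measure ι)
    (Real.HolderConjugate.two_two) (f := fun i => u i ^ (1/2:ℝ)) (g := fun i => v i ^ (1/2:ℝ))
    (measurable_from_top.aemeasurable) (measurable_from_top.aemeasurable)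
  simp only [Pi.mul_apply, MeasureTheory.lintegral_count, ← ENNReal.rpow_mul] at h2
  norm_num at h2
  have h3 : ∑' i, t i ≤ (∑' i, u i) ^ (1/2:ℝ) * (∑' i, v i) ^ (1/2:ℝ) := by
    refine (ENNReal.tsum_le_tsum h1).trans ?_
    norm_num
    exact h2
  calc _ ≤ ((∑' i, u i) ^ (1/2:ℝ) * (∑' i, v i) ^ (1/2:ℝ)) ^ 2 := by gcongr
    _ = _ := by
      rw [mul_pow, ← ENNReal.rpow_natCast, ← ENNReal.rpow_natCast, ← ENNReal.rpow_mul,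
        ← ENNReal.rpow_mul]
      norm_num

lemma nf_tsum_prod (f : ℤ → ℝ≥0∞) (n : ℕ) :
    ∑' x : Fin n → ℤ, ∏ i, f (x i) = (∑' j, f j) ^ n := by
  induction n with
  | zero => simp [tsum_fintype]
  | succ n ih =>
    rw [← (Fin.consEquiv (fun _ : Fin (n+1) => ℤ)).tsum_eq, ENNReal.tsum_prod']
    simp only [Fin.consEquiv, Equiv.coe_fn_mk, Fin.prod_univ_succ, Fin.cons_zero, Fin.cons_succ]
    simp_rw [ENNReal.tsum_mul_left, ih, ENNReal.tsum_mul_right]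
    rw [pow_succ, mul_comm]

lemma nf_summable (γ : ℝ) (hγ : 1/2 < γ) : Summable (fun j : ℤ => (1 + (j:ℝ)^2) ^ (-γ)) := by
  have h := Real.summable_abs_int_rpow (b := 2 * γ) (by linarith)
  refine (summable_of_ne_finset_zero (f := fun j : ℤ => if j = 0 then (1:ℝ) else 0) (s := {0})
    (by intro b hb; simpa using hb) |>.add h).of_nonneg_of_le (fun j => by positivity) ?_
  intro j
  by_cases hj : j = 0
  · subst hj
    simp
    positivity
  · simp only [hj, if_false, zero_add]
    have hj' : 0 < |(j:ℝ)| := by positivity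
    rw [show -(2*γ) = 2 * (-γ) by ring, Real.rpow_mul hj'.le]
    apply Real.rpow_le_rpow_of_nonpos
    · positivity
    · norm_num
    · linarith

lemma nf_size (n : ℕ) (k : ℤ) (κ : Fin (n+1) → ℤ) (h : κ ∈ NRSet (n+1) (Nat.succ_pos n) k) :
    2 * |k - κ 0| ≤ |κ 0| ∧ ∀ i : Fin n, |κ i.succ| ≤ |k| := by
  obtain ⟨h1, h2, -⟩ := h
  have h2' : ∀ i : Fin n, 2 * ((n:ℤ)+1) * |κ i.succ| ≤ |κ 0| := by
    intro i
    have := h2 i.succ (Fin.succ_ne_zero i)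
    push_cast at this
    exact this
  have hk : k - κ 0 = ∑ i : Fin n, (-1:ℤ)^((i:ℕ)+1) * κ i.succ := by
    rw [← h1, altSum, Fin.sum_univ_succ]
    simp
  have h3 : |k - κ 0| ≤ ∑ i : Fin n, |κ i.succ| := by
    rw [hk]
    refine (Finset.abs_sum_le_sum_abs _ _).trans (Finset.sum_le_sum fun i _ => ?_)
    rw [abs_mul, abs_pow]; simp
  have h4 : 2 * ((n:ℤ)+1) * ∑ i : Fin n, |κ i.succ| ≤ n * |κ 0| := by
    rw [Finset.mul_sum]
    refine (Finset.sum_le_sum fun i _ => h2' i).trans ?_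
    simp
  have hn : (0:ℤ) ≤ n := by positivity
  have h5 : 2 * |k - κ 0| ≤ |κ 0| := by
    have : ((n:ℤ)+1) * (2 * |k - κ 0|) ≤ ((n:ℤ)+1) * |κ 0| := by
      nlinarith [abs_nonneg (κ 0)]
    exact le_of_mul_le_mul_left this (by positivity)
  refine ⟨h5, fun i => ?_⟩
  have h6 := abs_sub_abs_le_abs_sub (κ 0) k
  rw [abs_sub_comm] at h6
  have h7 : 2 * |κ i.succ| ≤ |κ 0| := by
    nlinarith [h2' i, abs_nonneg (κ i.succ)]
  linarith

lemma nf_norm_prod (p : ℕ) (a : ℤ → ℂ) (κ : Fin p → ℤ) : ‖nfProd p a κ‖ = ∏ i, ‖a (κ i)‖ := by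
  rw [nfProd, norm_prod]
  refine Finset.prod_congr rfl fun i _ => ?_
  split_ifs <;> simp

lemma nf_pointwise (n : ℕ) (hn : 0 < n) (s ε : ℝ) (hs : 0 < s) (hε1 : ε < 1)
    (a : ℤ → ℂ) (k : ℤ) (κ : Fin (n+1) → ℤ) (h : κ ∈ NRSet (n+1) (Nat.succ_pos n) k) :
    (1 + (k:ℝ)^2) ^ (s + ε) * ‖nfTerm (n+1) a k κ‖ ^ 2 ≤
      (2 * 4 ^ s * ∏ i, ((1 + (κ i:ℝ)^2) ^ s * ‖a (κ i)‖^2)) *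
        ∏ i : Fin n, (1 + (κ i.succ:ℝ)^2) ^ (-(s + (1-ε)/n)) := by
  obtain ⟨h5, h6⟩ := nf_size n k κ h
  obtain ⟨-, -, h3⟩ := h
  have hn' : (n:ℝ) ≠ 0 := by positivity
  set Φ : ℤ := k^2 - altSq (n+1) κ with hΦ
  have hK : (0:ℝ) < 1 + (k:ℝ)^2 := by positivity
  have hΦ2 : (1 + (k:ℝ)^2) / 2 ≤ (Φ:ℝ)^2 := by
    have e1 : |(k:ℝ)| ≤ |(Φ:ℝ)| := by exact_mod_cast (le_max_left _ _).trans h3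
    have e2 : (1:ℝ) ≤ |(Φ:ℝ)| := by exact_mod_cast (le_max_right _ _).trans h3
    have e3 := sq_le_sq.2 e1
    have e4 : (1:ℝ) ≤ (Φ:ℝ)^2 := by rw [← sq_abs]; nlinarith
    linarith
  have hk0 : 1 + (k:ℝ)^2 ≤ 4 * (1 + (κ 0:ℝ)^2) := by
    have e1 : |k| ≤ 2 * |κ 0| := by
      have := abs_sub_abs_le_abs_sub k (κ 0)
      have := abs_nonneg (κ 0)
      linarith
    have e2 : |(k:ℝ)| ≤ 2 * |(κ 0:ℝ)| := by exact_mod_cast e1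
    have e3 := sq_abs (k:ℝ)
    have e4 := sq_abs (κ 0:ℝ)
    nlinarith [abs_nonneg (k:ℝ)]
  have hs1 : (1 + (k:ℝ)^2) ^ s ≤ 4 ^ s * (1 + (κ 0:ℝ)^2) ^ s := by
    rw [← Real.mul_rpow (by norm_num) (by positivity)]
    exact Real.rpow_le_rpow hK.le hk0 hs.le
  have hdist : (1 + (k:ℝ)^2) ^ (-(1-ε)) ≤ ∏ i : Fin n, (1 + (κ i.succ:ℝ)^2) ^ (-((1-ε)/n)) := by
    calc (1 + (k:ℝ)^2) ^ (-(1-ε)) = ∏ i : Fin n, (1 + (k:ℝ)^2) ^ (-((1-ε)/n)) := by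
          rw [Finset.prod_const, Finset.card_univ, Fintype.card_fin, ← Real.rpow_mul_natCast hK.le]
          congr 1
          field_simp
      _ ≤ _ := by
        refine Finset.prod_le_prod (fun i _ => by positivity) fun i _ => ?_
        apply Real.rpow_le_rpow_of_nonpos
        · positivity
        · have : |(κ i.succ:ℝ)| ≤ |(k:ℝ)| := by exact_mod_cast h6 i
          have := sq_le_sq.2 this
          linarith
        · have : 0 ≤ (1-ε)/n := div_nonneg (by linarith) (by positivity)
          linarith
  have hw : (1 + (k:ℝ)^2) ^ (s+ε) / (Φ:ℝ)^2 ≤ 2 * (4 ^ s * (1 + (κ 0:ℝ)^2) ^ s) *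
      ∏ i : Fin n, (1 + (κ i.succ:ℝ)^2) ^ (-((1-ε)/n)) := by
    calc (1 + (k:ℝ)^2) ^ (s+ε) / (Φ:ℝ)^2 ≤ (1 + (k:ℝ)^2) ^ (s+ε) / ((1 + (k:ℝ)^2) / 2) := by
          gcongr
      _ = 2 * (1 + (k:ℝ)^2) ^ s * (1 + (k:ℝ)^2) ^ (-(1-ε)) := by
          rw [mul_assoc, ← Real.rpow_add hK, show s + -(1-ε) = (s+ε) - 1 by ring,
            Real.rpow_sub_one hK.ne']
          field_simp
      _ ≤ _ := by gcongr
  have hnorm : ‖nfTerm (n+1) a k κ‖ ^ 2 = (∏ i, ‖a (κ i)‖^2) / (Φ:ℝ)^2 := by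
    rw [nfTerm, norm_div, nf_norm_prod, div_pow, Finset.prod_pow, ← hΦ]
    simp
  rw [hnorm]
  calc (1 + (k:ℝ)^2) ^ (s + ε) * ((∏ i, ‖a (κ i)‖^2) / (Φ:ℝ)^2)
      = ((1 + (k:ℝ)^2) ^ (s + ε) / (Φ:ℝ)^2) * (∏ i, ‖a (κ i)‖^2) := by ring
    _ ≤ (2 * (4 ^ s * (1 + (κ 0:ℝ)^2) ^ s) *
      ∏ i : Fin n, (1 + (κ i.succ:ℝ)^2) ^ (-((1-ε)/n))) * (∏ i, ‖a (κ i)‖^2) := by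
        gcongr
    _ = _ := by
      have e : ∏ i : Fin n, (1 + (κ i.succ:ℝ)^2) ^ (-((1-ε)/n)) =
          (∏ i : Fin n, (1 + (κ i.succ:ℝ)^2) ^ s) *
          ∏ i : Fin n, (1 + (κ i.succ:ℝ)^2) ^ (-(s + (1-ε)/n)) := by
        rw [← Finset.prod_mul_distrib]
        refine Finset.prod_congr rfl fun i _ => ?_
        rw [← Real.rpow_add (by positivity)]
        congr 1; ring
      rw [e, Finset.prod_mul_distrib, Fin.prod_univ_succ (fun i => (1 + (κ i:ℝ)^2) ^ s)]
      ring

lemma nf_tail_inj (n : ℕ) (k : ℤ) :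
    Function.Injective (fun (κ : NRSet (n+1) (Nat.succ_pos n) k) (i : Fin n) => κ.1 i.succ) := by
  rintro ⟨κ, hκ⟩ ⟨κ', hκ'⟩ h
  have h' : ∀ i : Fin n, κ i.succ = κ' i.succ := fun i => congrFun h i
  have e1 := hκ.1
  have e2 := hκ'.1
  rw [altSum, Fin.sum_univ_succ] at e1 e2
  simp only [h'] at e1
  apply Subtype.ext
  funext i
  refine Fin.cases ?_ h' i
  simp at e1 e2
  show κ 0 = κ' 0
  linarith

lemma nf_main (n : ℕ) (hn : 0 < n) (s ε : ℝ) (hs : 0 < s) (hε1 : ε < 1) (a : ℤ → ℂ) :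
    let B := ∑' j : ℤ, ENNReal.ofReal ((1 + (j:ℝ)^2) ^ s * ‖a j‖^2)
    let A := ∑' j : ℤ, ENNReal.ofReal ((1 + (j:ℝ)^2) ^ (-(s + (1-ε)/n)))
    ∑' k : ℤ, ENNReal.ofReal ((1 + (k:ℝ)^2) ^ (s + ε)) *
      (∑' κ : NRSet (n+1) (Nat.succ_pos n) k, ‖nfTerm (n+1) a k κ.1‖ₑ) ^ 2 ≤
      ENNReal.ofReal (2 * 4 ^ s) * B ^ (n+1) * A ^ n := by
  intro B A
  set b : ℤ → ℝ≥0∞ := fun j => ENNReal.ofReal ((1 + (j:ℝ)^2) ^ s * ‖a j‖^2) with hb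
  set w : ℤ → ℝ≥0∞ := fun j => ENNReal.ofReal ((1 + (j:ℝ)^2) ^ (-(s + (1-ε)/n))) with hw
  set c := ENNReal.ofReal (2 * 4 ^ s)
  have key : ∀ k : ℤ, ENNReal.ofReal ((1 + (k:ℝ)^2) ^ (s + ε)) *
      (∑' κ : NRSet (n+1) (Nat.succ_pos n) k, ‖nfTerm (n+1) a k κ.1‖ₑ) ^ 2 ≤
      (∑' κ : NRSet (n+1) (Nat.succ_pos n) k, c * ∏ i, b (κ.1 i)) * A ^ n := by
    intro k
    have hpos : 0 < (1 + (k:ℝ)^2) ^ (s + ε) := by positivity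
    set d := ENNReal.ofReal ((1 + (k:ℝ)^2) ^ (s + ε)) with hd
    have hd0 : d ≠ 0 := by simpa [hd] using hpos
    have hdt : d ≠ ⊤ := ENNReal.ofReal_ne_top
    have hcs := nf_cs (fun κ : NRSet (n+1) (Nat.succ_pos n) k => ‖nfTerm (n+1) a k κ.1‖ₑ)
      (fun κ => d⁻¹ * (c * ∏ i, b (κ.1 i))) (fun κ => ∏ i : Fin n, w (κ.1 i.succ)) ?_
    · rw [ENNReal.tsum_mul_left] at hcs
      calc _ ≤ d * (d⁻¹ * (∑' κ : NRSet (n+1) (Nat.succ_pos n) k, c * ∏ i, b (κ.1 i)) *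
            ∑' κ : NRSet (n+1) (Nat.succ_pos n) k, ∏ i : Fin n, w (κ.1 i.succ)) := by gcongr
        _ = (∑' κ : NRSet (n+1) (Nat.succ_pos n) k, c * ∏ i, b (κ.1 i)) *
            ∑' κ : NRSet (n+1) (Nat.succ_pos n) k, ∏ i : Fin n, w (κ.1 i.succ) := by
          rw [← mul_assoc, ← mul_assoc, ENNReal.mul_inv_cancel hd0 hdt, one_mul]
        _ ≤ _ := by
          gcongr
          rw [← nf_tsum_prod w n]
          exact ENNReal.tsum_comp_le_tsum_of_injective (nf_tail_inj n k)
            (fun x : Fin n → ℤ => ∏ i, w (x i))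
    · intro κ
      have hp := ENNReal.ofReal_le_ofReal (nf_pointwise n hn s ε hs hε1 a k κ.1 κ.2)
      rw [ENNReal.ofReal_mul hpos.le, ENNReal.ofReal_mul (by positivity),
        ENNReal.ofReal_mul (by positivity), ENNReal.ofReal_prod_of_nonneg (fun _ _ => by positivity),
        ENNReal.ofReal_prod_of_nonneg (fun _ _ => by positivity),
        ENNReal.ofReal_pow (norm_nonneg _), ofReal_norm] at hp
      calc ‖nfTerm (n+1) a k κ.1‖ₑ ^ 2 = d⁻¹ * (d * ‖nfTerm (n+1) a k κ.1‖ₑ ^ 2) := by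
            rw [← mul_assoc, ENNReal.inv_mul_cancel hd0 hdt, one_mul]
        _ ≤ d⁻¹ * ((c * ∏ i, b (κ.1 i)) * ∏ i : Fin n, w (κ.1 i.succ)) := by
            gcongr
        _ = _ := by simp only [mul_assoc]
  refine (ENNReal.tsum_le_tsum key).trans ?_
  rw [ENNReal.tsum_mul_right]
  gcongr
  simp_rw [ENNReal.tsum_mul_left]
  gcongr
  rw [← nf_tsum_prod b (n+1), ← ENNReal.tsum_sigma' (fun x : Σ k, NRSet (n+1) (Nat.succ_pos n) k =>
    ∏ i, b (x.2.1 i))]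
  refine ENNReal.tsum_comp_le_tsum_of_injective
    (f := fun x : Σ k, NRSet (n+1) (Nat.succ_pos n) k => x.2.1) ?_ (fun x => ∏ i, b (x i))
  rintro ⟨k, κ, h⟩ ⟨k', κ', h'⟩ e
  simp only at e
  subst e
  obtain rfl : k = k' := h.1.symm.trans h'.1
  rfl

/-- Smoothing bound for the normal-form transformation `T` (Lemma `Normal Form Regularity`):
`T` maps `h^s` into `h^{s+ε}` with bound `‖Ta‖_{h^{s+ε}} ≤ C ‖a‖_{h^s}^p`, and the defining
series converges absolutely. -/
theorem stmt5 (p : ℕ) (hp : Odd p) (hp5 : 5 ≤ p) (s ε : ℝ)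
    (hs : s > ((p:ℝ) - 3) / (2 * ((p:ℝ) - 1)))
    (hε0 : 0 < ε)
    (hε : ε < min (((p:ℝ) - 1) * s - ((p:ℝ) - 3) / 2) 1) :
    ∃ C : ℝ, 0 < C ∧ ∀ a : ℤ → ℂ,
      Summable (fun k : ℤ => (1 + (k:ℝ)^2) ^ s * ‖a k‖^2) →
      ((∀ k : ℤ, Summable (fun κ : NRSet p (by omega) k => ‖nfTerm p a k κ.1‖))
        ∧ Real.sqrt (∑' k : ℤ, (1 + (k:ℝ)^2) ^ (s + ε) *
              ‖∑' κ : NRSet p (by omega) k, nfTerm p a k κ.1‖^2)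
            ≤ C * (Real.sqrt (∑' k : ℤ, (1 + (k:ℝ)^2) ^ s * ‖a k‖^2)) ^ p) := by
  obtain ⟨n, rfl⟩ : ∃ n, p = n + 1 := ⟨p - 1, by omega⟩
  have hn : 0 < n := by omega
  have hn4 : (4:ℝ) ≤ n := by exact_mod_cast (by omega : 4 ≤ n)
  push_cast at hs hε
  have hε1 : ε < 1 := hε.trans_le (min_le_right _ _)
  have hε2 := hε.trans_le (min_le_left _ _)
  have hs0 : 0 < s := by
    refine lt_of_le_of_lt ?_ hs
    exact div_nonneg (by linarith) (by linarith)
  have hγ : 1/2 < s + (1-ε)/n := by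
    have : (1-ε)/n = (1-ε)/n * 1 := by ring
    have h1 : (n:ℝ) * ((1-ε)/n) = 1 - ε := by field_simp
    nlinarith
  set A := ∑' j : ℤ, ENNReal.ofReal ((1 + (j:ℝ)^2) ^ (-(s + (1-ε)/n))) with hA
  have hAt : A ≠ ⊤ := (nf_summable _ hγ).tsum_ofReal_ne_top
  set D : ℝ := 2 * 4 ^ s * A.toReal ^ n with hD
  have hD0 : 0 ≤ D := by positivity
  refine ⟨Real.sqrt D + 1, by positivity, fun a ha => ?_⟩
  have main := nf_main n hn s ε hs0 hε1 a
  simp only at main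
  rw [← hA, ← ENNReal.ofReal_tsum_of_nonneg (fun _ => by positivity) ha] at main
  set B : ℝ := ∑' j : ℤ, (1 + (j:ℝ)^2) ^ s * ‖a j‖^2 with hB
  have hB0 : 0 ≤ B := tsum_nonneg fun _ => by positivity
  have hR : ENNReal.ofReal (2 * 4 ^ s) * ENNReal.ofReal B ^ (n+1) * A ^ n =
      ENNReal.ofReal (D * B ^ (n+1)) := by
    rw [mul_right_comm, ENNReal.ofReal_mul hD0, hD,
      ENNReal.ofReal_mul (by positivity : (0:ℝ) ≤ 2 * 4 ^ s),
      ENNReal.ofReal_pow hB0, ENNReal.ofReal_pow ENNReal.toReal_nonneg, ENNReal.ofReal_toReal hAt]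
  rw [hR] at main
  have hfin : ∀ k : ℤ, ∑' κ : NRSet (n+1) (Nat.succ_pos n) k, ‖nfTerm (n+1) a k κ.1‖ₑ ≠ ⊤ := by
    intro k htop
    have h1 := (ENNReal.le_tsum k).trans main
    rw [htop] at h1
    have hpos : 0 < (1 + (k:ℝ)^2) ^ (s + ε) := by positivity
    rw [ENNReal.top_pow (by norm_num), ENNReal.mul_top (by simpa using hpos)] at h1
    exact ENNReal.ofReal_ne_top (top_le_iff.1 h1)
  refine ⟨fun k => ?_, ?_⟩
  · have := ENNReal.summable_toReal (hfin k)
    simpa using this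
  · have h2 : ∑' k : ℤ, ENNReal.ofReal ((1 + (k:ℝ)^2) ^ (s + ε) *
        ‖∑' κ : NRSet (n+1) (Nat.succ_pos n) k, nfTerm (n+1) a k κ.1‖^2) ≤
        ENNReal.ofReal (D * B ^ (n+1)) := by
      refine (ENNReal.tsum_le_tsum fun k => ?_).trans main
      rw [ENNReal.ofReal_mul (by positivity), ENNReal.ofReal_pow (norm_nonneg _), ofReal_norm]
      gcongr
      exact enorm_tsum_le_tsum_enorm
    have h3 : ∑' k : ℤ, ((1 + (k:ℝ)^2) ^ (s + ε) *
        ‖∑' κ : NRSet (n+1) (Nat.succ_pos n) k, nfTerm (n+1) a k κ.1‖^2) ≤ D * B ^ (n+1) := by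
      have h4 := ENNReal.toReal_mono ENNReal.ofReal_ne_top h2
      rw [ENNReal.toReal_ofReal (by positivity), ENNReal.tsum_toReal_eq
        (fun _ => ENNReal.ofReal_ne_top)] at h4
      refine le_trans (le_of_eq (tsum_congr fun k => ?_)) h4
      rw [ENNReal.toReal_ofReal (by positivity)]
    calc _ ≤ Real.sqrt (D * B ^ (n+1)) := Real.sqrt_le_sqrt h3
      _ = Real.sqrt D * Real.sqrt B ^ (n+1) := by
        rw [Real.sqrt_mul hD0]
        congr 1
        rw [Real.sqrt_eq_iff_mul_self_eq (by positivity) (by positivity), ← mul_pow,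
          Real.mul_self_sqrt hB0]
      _ ≤ _ := by
        gcongr
        linarith
end

section
/- Let p ≥ 5 be odd, s > (p−3)/(2(p−1)), and 0 < ε < min((p−1)s − (p−3)/2, 1). For k ∈ ℤ let S_k denote the set of tuples (k₁,…,k_p) ∈ ℤ^p with k = k₁ − k₂ + ⋯ + k_p, |k₁| ≥ 2p · max_{2≤i≤p}|k_i|, and |Φ| ≥ max(|k|,1), where Φ := k² − k₁² + k₂² − ⋯ − k_p². Then sup_{k∈ℤ} Σ_{(k₁,…,k_p)∈S_k} ⟨k⟩^{2s+2ε} / ( Φ² · ∏_{i=1}^p ⟨k_i⟩^{2s} ) < ∞, with a bound depending only on p, s, ε. -/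
open scoped BigOperators

lemma aux_step (b : ℝ) (hb0 : 0 < b) (hb : b < 1/2) (N : ℕ) :
    2 * (1 + ((N:ℝ)+1)^2) ^ (b - 1/2) ≤
      4 / b * ((1 + ((N:ℝ)+1)^2) ^ b - (1 + (N:ℝ)^2) ^ b) := by
  have hN : (0:ℝ) ≤ N := Nat.cast_nonneg N
  set A : ℝ := 1 + ((N:ℝ)+1)^2 with hA
  set B : ℝ := 1 + (N:ℝ)^2 with hB
  have hA0 : 0 < A := by positivity
  have hB0 : 0 < B := by positivity
  have h1 : (1 + (B/A - 1)) ^ b ≤ 1 + b * (B/A - 1) :=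
    rpow_one_add_le_one_add_mul_self (by linarith [div_pos hB0 hA0]) hb0.le (by linarith)
  have h2 : B ^ b ≤ A ^ b * (1 + b * (B/A - 1)) := by
    have : (1 + (B/A - 1)) ^ b = B ^ b / A ^ b := by
      rw [← Real.div_rpow hB0.le hA0.le]; congr 1; ring
    rw [this, div_le_iff₀ (by positivity)] at h1
    linarith
  have h3 : A ^ (b - 1/2) = A ^ b / A * Real.sqrt A := by
    rw [Real.rpow_sub hA0, ← Real.sqrt_eq_rpow]
    have := Real.mul_self_sqrt hA0.le
    have h0 : 0 < Real.sqrt A := Real.sqrt_pos.2 hA0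
    field_simp
    nlinarith
  have h4 : Real.sqrt A ≤ 2 * (2 * N + 1) := by
    apply Real.sqrt_le_iff.2
    constructor
    · positivity
    · nlinarith
  have h5 : A ^ b * (1 + b * (B/A - 1)) = A ^ b - b * (A ^ b / A) * (2 * N + 1) := by
    have : B = A - (2 * N + 1) := by rw [hA, hB]; ring
    rw [this]; field_simp; ring
  have h6 : b * (A ^ b / A) * (2 * N + 1) ≤ A ^ b - B ^ b := by linarith
  have h7 : 0 < A ^ b / A := by positivity
  calc 2 * A ^ (b - 1/2) = 2 * (A ^ b / A * Real.sqrt A) := by rw [h3]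
    _ ≤ 2 * (A ^ b / A * (2 * (2 * N + 1))) := by gcongr
    _ = 4 / b * (b * (A ^ b / A) * (2 * N + 1)) := by field_simp; ring
    _ ≤ _ := by gcongr

lemma aux_sum (b : ℝ) (hb0 : 0 < b) (hb : b < 1/2) (N : ℕ) :
    ∑ y ∈ Finset.Icc (-(N:ℤ)) N, (1 + (y:ℝ)^2) ^ (b - 1/2) ≤ 4 / b * (1 + (N:ℝ)^2) ^ b := by
  induction N with
  | zero =>
    simp
    rw [le_div_iff₀ hb0]; linarith
  | succ N ih =>
    have : Finset.Icc (-((N+1:ℕ):ℤ)) ((N+1:ℕ):ℤ) =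
        insert ((N:ℤ)+1) (insert (-((N:ℤ)+1)) (Finset.Icc (-(N:ℤ)) N)) := by
      ext x; simp only [Finset.mem_Icc, Finset.mem_insert]; push_cast; omega
    rw [this, Finset.sum_insert, Finset.sum_insert]
    · have := aux_step b hb0 hb N
      push_cast
      rw [neg_sq]
      linarith
    · simp only [Finset.mem_Icc]; omega
    · simp only [Finset.mem_Icc, Finset.mem_insert]; omega

lemma aux_geom (n : ℕ) (hn : 4 ≤ n) (k : ℤ) (κ : Fin (n+1) → ℤ)
    (hκ : κ ∈ NRSet (n+1) (Nat.succ_pos n) k) :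
    k ≠ 0 ∧ |k| ≤ 2 * |κ 0| ∧ (∀ i : Fin n, |κ i.succ| ≤ |k|) := by
  obtain ⟨h1, h2, h3⟩ := hκ
  change ∀ i, i ≠ (0 : Fin (n+1)) → 2 * ((n+1 : ℕ):ℤ) * |κ i| ≤ |κ 0| at h2
  have h2' : ∀ i : Fin n, 2 * ((n:ℤ)+1) * |κ i.succ| ≤ |κ 0| := fun i => by
    have := h2 i.succ (Fin.succ_ne_zero i); push_cast at this; exact this
  have hd : 2 * ((n:ℤ)+1) * |k - κ 0| ≤ n * |κ 0| := by
    have e : k - κ 0 = ∑ i : Fin n, (-1:ℤ)^(i.succ : ℕ) * κ i.succ := by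
      rw [← h1, altSum, Fin.sum_univ_succ]; simp
    rw [e]
    calc 2 * ((n:ℤ)+1) * |∑ i : Fin n, (-1:ℤ)^(i.succ : ℕ) * κ i.succ|
        ≤ 2 * ((n:ℤ)+1) * ∑ i : Fin n, |(-1:ℤ)^(i.succ : ℕ) * κ i.succ| := by
          gcongr; exact Finset.abs_sum_le_sum_abs _ _
      _ = ∑ i : Fin n, 2 * ((n:ℤ)+1) * |κ i.succ| := by
          rw [Finset.mul_sum]; simp [abs_mul, abs_pow]
      _ ≤ ∑ i : Fin n, |κ 0| := Finset.sum_le_sum fun i _ => h2' i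
      _ = n * |κ 0| := by simp
  have hd2 : 2 * |k - κ 0| ≤ |κ 0| := by
    have : 0 ≤ |κ 0| := abs_nonneg _
    have hn' : (0:ℤ) < n + 1 := by positivity
    by_contra hc
    push Not at hc
    nlinarith
  have a1 : |κ 0| ≤ |k| + |k - κ 0| := by
    have := abs_sub_abs_le_abs_sub (κ 0) k; rw [abs_sub_comm] at this; linarith
  have a2 : |k| ≤ |κ 0| + |k - κ 0| := by
    have := abs_sub_abs_le_abs_sub k (κ 0); linarith
  have a3 : ∀ i : Fin n, |κ i.succ| ≤ |k| := fun i => by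
    have := h2' i
    have h0 : 0 ≤ |κ i.succ| := abs_nonneg _
    have hn' : (4:ℤ) ≤ n := by exact_mod_cast hn
    nlinarith
  refine ⟨?_, by linarith [abs_nonneg (κ 0)], a3⟩
  rintro rfl
  have z0 : κ 0 = 0 := by
    have : |κ 0| ≤ 0 := by
      rw [abs_zero] at a1
      linarith
    simpa using this
  have zi : ∀ i : Fin n, κ i.succ = 0 := fun i => by simpa using a3 i
  have : altSq (n+1) κ = 0 := by
    rw [altSq, Fin.sum_univ_succ]; simp [z0, zi]
  rw [this] at h3
  simp at h3

lemma aux_term (n : ℕ) (hn : 4 ≤ n) (s ε σ : ℝ) (hσ0 : 0 < σ) (hσ : σ < s)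
    (k : ℤ) (κ : Fin (n+1) → ℤ)
    (hκ : κ ∈ NRSet (n+1) (Nat.succ_pos n) k) :
    (1 + (k:ℝ)^2) ^ (s + ε) /
          (((k^2 - altSq (n+1) κ : ℤ) : ℝ)^2 * ∏ i : Fin (n+1), (1 + ((κ i : ℝ))^2) ^ s)
      ≤ 2 * 4 ^ s * (1 + (k:ℝ)^2) ^ (ε - 1) * ∏ i : Fin n, (1 + ((κ i.succ : ℝ))^2) ^ (-σ) := by
  obtain ⟨hk, hk0, -⟩ := aux_geom n hn k κ hκ
  obtain ⟨-, -, h3⟩ := hκ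
  have h4 : |k| ≤ |k^2 - altSq (n+1) κ| := (le_max_left _ _).trans h3
  set Φ : ℤ := k^2 - altSq (n+1) κ with hΦ
  have k1 : (1:ℤ) ≤ k^2 := by have := sq_pos_of_ne_zero hk; omega
  have k2 : k^2 ≤ Φ^2 := sq_le_sq.2 h4
  have f1 : (1 + (k:ℝ)^2) / 2 ≤ (Φ:ℝ)^2 := by
    have : 1 + k^2 ≤ 2 * Φ^2 := by linarith
    have : (1 + (k:ℝ)^2) ≤ 2 * (Φ:ℝ)^2 := by exact_mod_cast this
    linarith
  have f2 : (1 + (k:ℝ)^2) ≤ 4 * (1 + (κ 0:ℝ)^2) := by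
    have : k^2 ≤ (2 * κ 0)^2 := sq_le_sq.2 (by rw [abs_mul]; simpa using hk0)
    have : (k:ℝ)^2 ≤ (2 * κ 0)^2 := by exact_mod_cast this
    nlinarith
  have hs0 : 0 < s := by linarith
  have f3 : (1 + (k:ℝ)^2)^s / 4^s ≤ (1 + (κ 0:ℝ)^2)^s := by
    rw [← Real.div_rpow (by positivity) (by norm_num)]
    exact Real.rpow_le_rpow (by positivity) (by linarith) hs0.le
  have f4 : ∏ i : Fin n, (1 + ((κ i.succ : ℝ))^2) ^ σ ≤ ∏ i : Fin n, (1 + ((κ i.succ : ℝ))^2) ^ s := by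
    apply Finset.prod_le_prod
    · intros; positivity
    · intro i _
      exact Real.rpow_le_rpow_of_exponent_le (by nlinarith [sq_nonneg (κ i.succ : ℝ)]) hσ.le
  rw [Fin.prod_univ_succ]
  have hK : 0 < 1 + (k:ℝ)^2 := by positivity
  have hP : 0 < ∏ i : Fin n, (1 + ((κ i.succ : ℝ))^2) ^ σ :=
    Finset.prod_pos fun i _ => by positivity
  calc _ ≤ (1 + (k:ℝ)^2) ^ (s + ε) / ((1 + (k:ℝ)^2) / 2 * ((1 + (k:ℝ)^2)^s / 4^s *
        ∏ i : Fin n, (1 + ((κ i.succ : ℝ))^2) ^ σ)) := by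
        gcongr
    _ = _ := by
        have : ∏ i : Fin n, (1 + ((κ i.succ : ℝ))^2) ^ (-σ) =
            (∏ i : Fin n, (1 + ((κ i.succ : ℝ))^2) ^ σ)⁻¹ := by
          rw [← Finset.prod_inv_distrib]
          exact Finset.prod_congr rfl fun i _ => Real.rpow_neg (by positivity) _
        rw [this, Real.rpow_add hK, Real.rpow_sub hK, Real.rpow_one]
        field_simp

lemma aux_main (n : ℕ) (hn : 4 ≤ n) (s ε : ℝ) (hε0 : 0 < ε) (hε1 : ε < 1)
    (hs : ε < n * s + 1 - n / 2) :
    ∃ C : ℝ, ∀ k : ℤ,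
      Summable (fun κ : NRSet (n+1) (Nat.succ_pos n) k =>
        (1 + (k:ℝ)^2) ^ (s + ε) /
          (((k^2 - altSq (n+1) κ.1 : ℤ) : ℝ)^2 * ∏ i : Fin (n+1), (1 + ((κ.1 i : ℝ))^2) ^ s))
      ∧ (∑' κ : NRSet (n+1) (Nat.succ_pos n) k,
          (1 + (k:ℝ)^2) ^ (s + ε) /
            (((k^2 - altSq (n+1) κ.1 : ℤ) : ℝ)^2 * ∏ i : Fin (n+1), (1 + ((κ.1 i : ℝ))^2) ^ s)) ≤ C := by
  have hn' : (4:ℝ) ≤ n := by exact_mod_cast hn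
  have hn0 : (0:ℝ) < n := by linarith
  obtain ⟨b, hb⟩ : ∃ b : ℝ, b = (1 - ε) / n := ⟨_, rfl⟩
  have hbn : b * n = 1 - ε := by rw [hb]; field_simp
  have hb0 : 0 < b := by rw [hb]; exact div_pos (by linarith) hn0
  have hb2 : b < 1/2 := by nlinarith
  have hσs : 1/2 - b < s := by
    by_contra hc
    push Not at hc
    nlinarith
  refine ⟨2 * 4 ^ s * (4 / b) ^ n, fun k => ?_⟩
  let T : Finset (Fin n → ℤ) := Fintype.piFinset fun _ => Finset.Icc (-(k.natAbs:ℤ)) k.natAbs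
  let e : NRSet (n+1) (Nat.succ_pos n) k → T := fun κ => ⟨fun i => κ.1 i.succ, by
    rw [Fintype.mem_piFinset]
    intro i
    have := (aux_geom n hn k κ.1 κ.2).2.2 i
    rw [Finset.mem_Icc, ← abs_le]
    simpa using this⟩
  have he : Function.Injective e := by
    intro x y hxy
    have h1 : ∀ i : Fin n, x.1 i.succ = y.1 i.succ := fun i =>
      congrFun (congrArg Subtype.val hxy) i
    have h2 : altSum (n+1) x.1 = altSum (n+1) y.1 := x.2.1.trans y.2.1.symm
    rw [altSum, altSum, Fin.sum_univ_succ, Fin.sum_univ_succ] at h2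
    simp only [h1] at h2
    apply Subtype.ext
    funext i
    refine Fin.cases ?_ h1 i
    simpa using h2
  have : Finite (NRSet (n+1) (Nat.succ_pos n) k) := Finite.of_injective e he
  have hsum : Summable (fun κ : NRSet (n+1) (Nat.succ_pos n) k =>
        (1 + (k:ℝ)^2) ^ (s + ε) /
          (((k^2 - altSq (n+1) κ.1 : ℤ) : ℝ)^2 * ∏ i : Fin (n+1), (1 + ((κ.1 i : ℝ))^2) ^ s)) :=
    Summable.of_finite
  refine ⟨hsum, ?_⟩
  have hK : 0 < 1 + (k:ℝ)^2 := by positivity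
  let g : (Fin n → ℤ) → ℝ := fun y =>
    2 * 4 ^ s * (1 + (k:ℝ)^2) ^ (ε - 1) * ∏ i : Fin n, (1 + ((y i : ℝ))^2) ^ (b - 1/2)
  have hg : ∀ y, 0 ≤ g y := fun y =>
    mul_nonneg (by positivity) (Finset.prod_nonneg fun i _ => by positivity)
  calc _ ≤ ∑' y : T, g y.1 := by
        refine Summable.tsum_le_tsum_of_inj e he (fun c _ => hg c) (fun κ => ?_) hsum
          Summable.of_finite
        have := aux_term n hn s ε (1/2 - b) (by linarith) hσs k κ.1 κ.2
        rw [neg_sub] at this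
        exact this
    _ = ∑ y ∈ T, g y := Finset.tsum_subtype T g
    _ = 2 * 4 ^ s * (1 + (k:ℝ)^2) ^ (ε - 1) *
        (∑ y ∈ Finset.Icc (-(k.natAbs:ℤ)) k.natAbs, (1 + (y:ℝ)^2) ^ (b - 1/2)) ^ n := by
        rw [← Finset.mul_sum]
        congr 1
        have := Finset.prod_univ_sum (fun _ : Fin n => Finset.Icc (-(k.natAbs:ℤ)) k.natAbs)
          (fun _ y => (1 + (y:ℝ)^2) ^ (b - 1/2))
        rw [← this]; simp
    _ ≤ 2 * 4 ^ s * (1 + (k:ℝ)^2) ^ (ε - 1) * (4 / b * (1 + (k.natAbs:ℝ)^2) ^ b) ^ n := by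
        have := aux_sum b hb0 hb2 k.natAbs
        have h0 : 0 ≤ ∑ y ∈ Finset.Icc (-(k.natAbs:ℤ)) k.natAbs, (1 + (y:ℝ)^2) ^ (b - 1/2) :=
          Finset.sum_nonneg fun y _ => by positivity
        gcongr
    _ = 2 * 4 ^ s * (4 / b) ^ n := by
        have h1 : ((k.natAbs:ℝ))^2 = (k:ℝ)^2 := by
          rw [Nat.cast_natAbs, Int.cast_abs, sq_abs]
        rw [h1, mul_pow, ← Real.rpow_natCast ((1 + (k:ℝ)^2) ^ b), ← Real.rpow_mul hK.le, hbn]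
        have : (1 + (k:ℝ)^2) ^ (ε - 1) * (1 + (k:ℝ)^2) ^ (1 - ε) = 1 := by
          rw [← Real.rpow_add hK]; simp
        linear_combination (2 * 4 ^ s * (4 / b) ^ n) * this

/-- The Cauchy–Schwarz sum controlling the normal-form operator `T` with symbol `1/Φ` is
bounded uniformly in the external frequency `k`:
`sup_k Σ_{S_k} ⟨k⟩^{2s+2ε} / (Φ² ∏ ⟨k_i⟩^{2s}) < ∞`. -/
theorem stmt6 (p : ℕ) (hp : Odd p) (hp5 : 5 ≤ p) (s ε : ℝ)
    (hs : s > ((p:ℝ) - 3) / (2 * ((p:ℝ) - 1)))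
    (hε0 : 0 < ε)
    (hε : ε < min (((p:ℝ) - 1) * s - ((p:ℝ) - 3) / 2) 1) :
    ∃ C : ℝ, ∀ k : ℤ,
      Summable (fun κ : NRSet p (by omega) k =>
        (1 + (k:ℝ)^2) ^ (s + ε) /
          (((k^2 - altSq p κ.1 : ℤ) : ℝ)^2 * ∏ i : Fin p, (1 + ((κ.1 i : ℝ))^2) ^ s))
      ∧ (∑' κ : NRSet p (by omega) k,
          (1 + (k:ℝ)^2) ^ (s + ε) /
            (((k^2 - altSq p κ.1 : ℤ) : ℝ)^2 * ∏ i : Fin p, (1 + ((κ.1 i : ℝ))^2) ^ s)) ≤ C := by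
  obtain ⟨n, rfl⟩ : ∃ n, p = n + 1 := ⟨p - 1, by omega⟩
  have h1 := hε.trans_le (min_le_left _ _)
  have h2 := hε.trans_le (min_le_right _ _)
  push_cast at h1
  exact aux_main n (by omega) s ε hε0 h2 (by linarith)
end

section
/- Let p ≥ 5 be odd, s > (p−3)/(2(p−1)), and 0 < ε < min((p−1)s − (p−3)/2, 1). Then there exist θ > 0 and C > 0, depending only on p, s, ε, such that for every k ∈ ℤ: Σ ⟨k⟩^{2s+2ε−2+θ} / ∏_{i=1}^p ⟨k_i⟩^{2s} ≤ C, where the sum runs over all tuples (k₁,…,k_p) ∈ ℤ^p with k = k₁ − k₂ + ⋯ + k_p and |k_i| ≤ |k|/(2p) for every index i ≠ 2. -/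
open scoped BigOperators

/-- The high–low region where the unique large frequency is the even-indexed `k₂`
(`Fin p` index `1`): all other internal frequencies satisfy `|k_i| ≤ |k|/(2p)`. -/
def HLSet (p : ℕ) (hp : 1 < p) (k : ℤ) : Set (Fin p → ℤ) :=
  {κ | altSum p κ = k ∧ ∀ i, i ≠ (⟨1, hp⟩ : Fin p) → 2 * (p:ℤ) * |κ i| ≤ |k|}


lemma aux_summable (r : ℝ) (hr : 1/2 < r) :
    Summable (fun n : ℤ => (1 + (n:ℝ)^2) ^ (-r)) := by
  have h1 := Real.summable_abs_int_rpow (b := 2*r) (by linarith)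
  refine Summable.of_norm_bounded_eventually h1 ?_
  have : ({0}ᶜ : Set ℤ) ∈ Filter.cofinite := (Set.finite_singleton 0).compl_mem_cofinite
  filter_upwards [this] with n hn
  have hn0 : (n:ℝ) ≠ 0 := by
    have : n ≠ 0 := by simpa using hn
    exact_mod_cast this
  have hpos : 0 < |(n:ℝ)| := abs_pos.mpr hn0
  rw [Real.norm_of_nonneg (by positivity)]
  have h2 : |(n:ℝ)| ^ (-(2*r)) = ((n:ℝ)^2) ^ (-r) := by
    rw [← sq_abs (n:ℝ), ← Real.rpow_natCast, ← Real.rpow_mul hpos.le]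
    congr 1
    push_cast; ring
  rw [h2]
  exact Real.rpow_le_rpow_of_nonpos (by positivity) (by linarith) (by linarith)

lemma aux_pi {ι : Type*} [Fintype ι] [DecidableEq ι] (g : ℤ → ℝ) (hg : ∀ n, 0 ≤ g n)
    (hs : Summable g) (S : Finset (ι → ℤ)) :
    ∑ x ∈ S, ∏ i, g (x i) ≤ ∏ _i : ι, ∑' n, g n := by
  classical
  let t : Finset ℤ := S.biUnion (fun x => Finset.univ.image x)
  calc ∑ x ∈ S, ∏ i, g (x i) ≤ ∑ x ∈ Fintype.piFinset (fun _ : ι => t), ∏ i, g (x i) := by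
        refine Finset.sum_le_sum_of_subset_of_nonneg ?_ ?_
        · intro x hx
          rw [Fintype.mem_piFinset]
          intro i
          exact Finset.mem_biUnion.mpr ⟨x, hx, Finset.mem_image_of_mem _ (Finset.mem_univ i)⟩
        · intro x _ _
          exact Finset.prod_nonneg fun i _ => hg _
    _ = ∏ _i : ι, ∑ n ∈ t, g n := by
        rw [Finset.prod_univ_sum]
    _ ≤ ∏ _i : ι, ∑' n, g n := by
        refine Finset.prod_le_prod (fun i _ => Finset.sum_nonneg fun n _ => hg n) ?_
        intro i _
        exact hs.sum_le_tsum t (fun n _ => hg n)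

lemma aux_alt (p : ℕ) (κ : Fin p → ℤ) (a : Fin p) :
    altSum p κ = (-1:ℤ)^(a:ℕ) * κ a + ∑ j : {j : Fin p // j ≠ a}, (-1:ℤ)^(j.1:ℕ) * κ j.1 :=
  Fintype.sum_eq_add_sum_subtype_ne (fun j : Fin p => (-1:ℤ)^(j:ℕ) * κ j) a

lemma aux_inj (p : ℕ) (hp : 1 < p) (k : ℤ) :
    Function.Injective (fun (κ : HLSet p hp k) (i : {i : Fin p // i ≠ ⟨1, hp⟩}) => κ.1 i.1) := by
  rintro ⟨κ, hκ, h1⟩ ⟨μ, hμ, h2⟩ h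
  have h' : ∀ i : Fin p, i ≠ ⟨1, hp⟩ → κ i = μ i := fun i hi => congrFun h ⟨i, hi⟩
  rw [aux_alt p _ ⟨1, hp⟩] at hκ hμ
  have : ∑ j : {j : Fin p // j ≠ ⟨1, hp⟩}, (-1:ℤ)^(j.1:ℕ) * κ j.1
      = ∑ j : {j : Fin p // j ≠ ⟨1, hp⟩}, (-1:ℤ)^(j.1:ℕ) * μ j.1 :=
    Finset.sum_congr rfl fun j _ => by rw [h' j.1 j.2]
  rw [this] at hκ
  simp only [pow_one] at hκ hμ
  have h1 : κ ⟨1, hp⟩ = μ ⟨1, hp⟩ := by linarith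
  apply Subtype.ext
  funext i
  by_cases hi : i = ⟨1, hp⟩
  · subst hi; exact h1
  · exact h' i hi

lemma aux_large (p : ℕ) (hp : 1 < p) (k : ℤ) (κ : Fin p → ℤ) (hκ : κ ∈ HLSet p hp k) :
    |k| ≤ 2 * |κ ⟨1, hp⟩| := by
  obtain ⟨h, hb⟩ := hκ
  rw [aux_alt p _ ⟨1, hp⟩] at h
  simp only [pow_one] at h
  set S := ∑ j : {j : Fin p // j ≠ ⟨1, hp⟩}, (-1:ℤ)^(j.1:ℕ) * κ j.1 with hS
  have h3 : |S| ≤ ∑ j : {j : Fin p // j ≠ ⟨1, hp⟩}, |κ j.1| := by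
    refine (Finset.abs_sum_le_sum_abs _ _).trans (le_of_eq ?_)
    refine Finset.sum_congr rfl fun j _ => ?_
    rw [abs_mul, abs_pow, abs_neg, abs_one, one_pow, one_mul]
  have h4 : 2 * (p:ℤ) * ∑ j : {j : Fin p // j ≠ ⟨1, hp⟩}, |κ j.1| ≤ p * |k| := by
    rw [Finset.mul_sum]
    refine (Finset.sum_le_sum (fun j _ => hb j.1 j.2)).trans ?_
    rw [Finset.sum_const, nsmul_eq_mul]
    refine mul_le_mul_of_nonneg_right ?_ (abs_nonneg k)
    have := Fintype.card_subtype_le (fun j : Fin p => j ≠ ⟨1, hp⟩)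
    rw [Fintype.card_fin] at this
    exact_mod_cast this
  have hp0 : (0:ℤ) < p := by exact_mod_cast (by omega : 0 < p)
  have h5 : 2 * |S| ≤ |k| := by
    have : (p:ℤ) * (2 * |S|) ≤ p * |k| := by nlinarith
    exact le_of_mul_le_mul_left this hp0
  have h6 : |k| ≤ |κ ⟨1, hp⟩| + |S| := by
    rw [← h]
    refine (abs_add_le _ _).trans ?_
    rw [abs_mul]; simp
  linarith

lemma aux_term_s7 (p : ℕ) (hp : 1 < p) (s r b e : ℝ) (hs : 0 < s) (hb : 0 ≤ b) (hb2 : r - s ≤ b)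
    (he : e - s + ((p:ℝ) - 1) * b ≤ 0) (k : ℤ) (κ : Fin p → ℤ) (hκ : κ ∈ HLSet p hp k) :
    (1 + (k:ℝ)^2) ^ e / ∏ i : Fin p, (1 + (κ i : ℝ)^2) ^ s ≤
      4 ^ s * ∏ i : {i : Fin p // i ≠ ⟨1, hp⟩}, (1 + (κ i.1 : ℝ)^2) ^ (-r) := by
  have hl := aux_large p hp k κ hκ
  have hl' : (|k| : ℝ) ≤ 2 * |(κ ⟨1, hp⟩ : ℝ)| := by exact_mod_cast hl
  have hJ : 1 + (k:ℝ)^2 ≤ 4 * (1 + (κ ⟨1, hp⟩ : ℝ)^2) := by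
    have := abs_nonneg (k:ℝ)
    rw [← sq_abs (k:ℝ), ← sq_abs (κ ⟨1, hp⟩ : ℝ)]
    nlinarith
  set K := 1 + (k:ℝ)^2 with hK
  have hK1 : 1 ≤ K := by nlinarith [sq_nonneg (k:ℝ)]
  have hK0 : 0 < K := by linarith
  rw [div_eq_mul_inv, ← Finset.prod_inv_distrib,
    Fintype.prod_eq_mul_prod_subtype_ne _ (⟨1, hp⟩ : Fin p)]
  have hA : ((1 + (κ ⟨1, hp⟩ : ℝ)^2) ^ s)⁻¹ ≤ 4 ^ s * K ^ (-s) := by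
    have : K ^ s ≤ 4 ^ s * (1 + (κ ⟨1, hp⟩ : ℝ)^2) ^ s := by
      rw [← Real.mul_rpow (by norm_num) (by positivity)]
      exact Real.rpow_le_rpow hK0.le hJ hs.le
    rw [Real.rpow_neg hK0.le, inv_le_iff_one_le_mul₀ (by positivity)]
    have hKs : 0 < K ^ s := by positivity
    rw [mul_right_comm, ← div_eq_mul_inv, le_div_iff₀ hKs]
    linarith
  have hB : ∏ i : {i : Fin p // i ≠ ⟨1, hp⟩}, ((1 + (κ i.1 : ℝ)^2) ^ s)⁻¹ ≤
      K ^ (((p:ℝ) - 1) * b) * ∏ i : {i : Fin p // i ≠ ⟨1, hp⟩}, (1 + (κ i.1 : ℝ)^2) ^ (-r) := by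
    have hc : Fintype.card {i : Fin p // i ≠ ⟨1, hp⟩} = p - 1 := by
      rw [Fintype.card_subtype_compl]; simp
    have : K ^ (((p:ℝ) - 1) * b) = ∏ _i : {i : Fin p // i ≠ ⟨1, hp⟩}, K ^ b := by
      rw [Finset.prod_const, Finset.card_univ, hc, ← Real.rpow_natCast, ← Real.rpow_mul hK0.le,
        Nat.cast_sub hp.le, mul_comm]
      simp
    rw [this, ← Finset.prod_mul_distrib]
    refine Finset.prod_le_prod (fun i _ => by positivity) ?_
    intro i _
    set n := 1 + (κ i.1 : ℝ)^2 with hn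
    have hn1 : 1 ≤ n := by nlinarith [sq_nonneg (κ i.1 : ℝ)]
    have hn0 : 0 < n := by linarith
    have hnK : n ≤ K := by
      have h1 := hκ.2 i.1 i.2
      have h2 : |κ i.1| ≤ |k| := by
        have : (1:ℤ) ≤ p := by exact_mod_cast hp.le
        nlinarith [abs_nonneg (κ i.1)]
      have h3 : |(κ i.1 : ℝ)| ≤ |(k:ℝ)| := by exact_mod_cast h2
      have := sq_le_sq.mpr h3
      linarith
    rw [← Real.rpow_neg hn0.le]
    calc n ^ (-s) = n ^ (r - s) * n ^ (-r) := by
          rw [← Real.rpow_add hn0]; congr 1; ring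
      _ ≤ K ^ b * n ^ (-r) := by
          refine mul_le_mul_of_nonneg_right ?_ (by positivity)
          exact (Real.rpow_le_rpow_of_exponent_le hn1 hb2).trans
            (Real.rpow_le_rpow hn0.le hnK hb)
  set P := ∏ i : {i : Fin p // i ≠ ⟨1, hp⟩}, (1 + (κ i.1 : ℝ)^2) ^ (-r) with hP
  have hP0 : 0 ≤ P := Finset.prod_nonneg fun i _ => by positivity
  calc _ ≤ K ^ e * ((4 ^ s * K ^ (-s)) * (K ^ (((p:ℝ) - 1) * b) * P)) := by
        refine mul_le_mul_of_nonneg_left ?_ (by positivity)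
        exact mul_le_mul hA hB (Finset.prod_nonneg fun i _ => by positivity) (by positivity)
    _ = K ^ (e - s + ((p:ℝ) - 1) * b) * (4 ^ s * P) := by
        rw [Real.rpow_add hK0, sub_eq_add_neg e s, Real.rpow_add hK0]; ring
    _ ≤ 1 * (4 ^ s * P) := by
        refine mul_le_mul_of_nonneg_right ?_ (by positivity)
        exact Real.rpow_le_one_of_one_le_of_nonpos hK1 he
    _ = _ := one_mul _

/-- The frequency-space sum arising in the high–low interaction case where the unique large
frequency is `k₂`: `Σ ⟨k⟩^{2s+2ε−2+θ} / ∏ ⟨k_i⟩^{2s}` is bounded uniformly in `k`, for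
some `θ > 0` depending only on `p, s, ε`.  (Recall `⟨k⟩^{2σ} = (1+k²)^σ`.) -/
theorem stmt7 (p : ℕ) (hp : Odd p) (hp5 : 5 ≤ p) (s ε : ℝ)
    (hs : s > ((p:ℝ) - 3) / (2 * ((p:ℝ) - 1)))
    (hε0 : 0 < ε)
    (hε : ε < min (((p:ℝ) - 1) * s - ((p:ℝ) - 3) / 2) 1) :
    ∃ θ : ℝ, 0 < θ ∧ ∃ C : ℝ, 0 < C ∧ ∀ k : ℤ,
      Summable (fun κ : HLSet p (by omega) k =>
        (1 + (k:ℝ)^2) ^ ((2*s + 2*ε - 2 + θ) / 2) /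
          ∏ i : Fin p, (1 + ((κ.1 i : ℝ))^2) ^ s)
      ∧ (∑' κ : HLSet p (by omega) k,
          (1 + (k:ℝ)^2) ^ ((2*s + 2*ε - 2 + θ) / 2) /
            ∏ i : Fin p, (1 + ((κ.1 i : ℝ))^2) ^ s) ≤ C := by
  have hp' : (5:ℝ) ≤ p := by exact_mod_cast hp5
  have hp1 : 1 < p := by omega
  obtain ⟨hε1, hε2⟩ := lt_min_iff.mp hε
  have hs0 : 0 < s := lt_trans (div_pos (by linarith) (by linarith)) hs
  obtain ⟨D, hD⟩ : ∃ D : ℝ, D = ((p:ℝ) - 1) * s - ((p:ℝ) - 3) / 2 - ε := ⟨_, rfl⟩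
  have hD0 : 0 < D := by linarith
  obtain ⟨r, hr⟩ : ∃ r : ℝ, r = 1/2 + D / (2 * ((p:ℝ) - 1)) := ⟨_, rfl⟩
  have hr1 : 1/2 < r := by
    have : 0 < D / (2 * ((p:ℝ) - 1)) := div_pos hD0 (by linarith)
    linarith
  have hpr : ((p:ℝ) - 1) * r = ((p:ℝ) - 1) / 2 + D / 2 := by
    have : (p:ℝ) - 1 ≠ 0 := by linarith
    rw [hr]; field_simp
  obtain ⟨b, hb⟩ : ∃ b : ℝ, b = max 0 (r - s) := ⟨_, rfl⟩
  have hb0 : 0 ≤ b := hb ▸ le_max_left _ _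
  have hb1 : r - s ≤ b := hb ▸ le_max_right _ _
  have hbb : ((p:ℝ) - 1) * b < 1 - ε := by
    rcases max_choice 0 (r - s) with h | h
    · rw [hb, h]; linarith
    · rw [hb, h, mul_sub, hpr]; linarith
  have hsum := aux_summable r hr1
  have hg : ∀ n : ℤ, 0 ≤ (1 + (n:ℝ)^2) ^ (-r) := fun n => by positivity
  have hT : 0 ≤ ∏ _i : {i : Fin p // i ≠ ⟨1, hp1⟩}, ∑' n : ℤ, (1 + (n:ℝ)^2) ^ (-r) :=
    Finset.prod_nonneg fun i _ => tsum_nonneg hg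
  refine ⟨2 * (1 - ε - ((p:ℝ) - 1) * b), by linarith,
    4 ^ s * (∏ _i : {i : Fin p // i ≠ ⟨1, hp1⟩}, ∑' n : ℤ, (1 + (n:ℝ)^2) ^ (-r)) + 1,
    by positivity, ?_⟩
  intro k
  have key : ∀ u : Finset (HLSet p hp1 k), ∑ κ ∈ u,
      ((1 + (k:ℝ)^2) ^ ((2*s + 2*ε - 2 + 2 * (1 - ε - ((p:ℝ) - 1) * b)) / 2) /
          ∏ i : Fin p, (1 + ((κ.1 i : ℝ))^2) ^ s) ≤
      4 ^ s * (∏ _i : {i : Fin p // i ≠ ⟨1, hp1⟩}, ∑' n : ℤ, (1 + (n:ℝ)^2) ^ (-r)) + 1 := by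
    intro u
    refine (Finset.sum_le_sum fun κ _ => aux_term_s7 p hp1 s r b _ hs0 hb0 hb1
      (by linarith) k κ.1 κ.2).trans ?_
    rw [← Finset.mul_sum]
    have h1 := aux_pi (fun n : ℤ => (1 + (n:ℝ)^2) ^ (-r)) hg hsum
      (u.image (fun (κ : HLSet p hp1 k) (i : {i : Fin p // i ≠ ⟨1, hp1⟩}) => κ.1 i.1))
    rw [Finset.sum_image (fun x _ y _ h => aux_inj p hp1 k h)] at h1
    have h2 := mul_le_mul_of_nonneg_left h1 (by positivity : (0:ℝ) ≤ 4 ^ s)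
    linarith
  have hnn : 0 ≤ (fun κ : HLSet p hp1 k =>
      ((1 + (k:ℝ)^2) ^ ((2*s + 2*ε - 2 + 2 * (1 - ε - ((p:ℝ) - 1) * b)) / 2) /
          ∏ i : Fin p, (1 + ((κ.1 i : ℝ))^2) ^ s)) := by
    intro κ
    exact div_nonneg (by positivity) (Finset.prod_nonneg fun i _ => by positivity)
  exact ⟨summable_of_sum_le hnn key, Real.tsum_le_of_sum_le hnn key⟩
end

section
/- Let p > 1 be odd, γ > 0, let f : ℝ → ℂ be continuous and 2π-periodic, and let u = u(t,x) be a smooth function defined for all t ≥ 0, 2π-periodic in x, satisfying i∂ₜu + ∂ₓ²u − |u|^{p−1}u + iγu = f(x) pointwise. Then limsup_{t→∞} ∫₀^{2π} |u(t,x)|² dx ≤ γ^{−2} ∫₀^{2π} |f(x)|² dx. In particular the limsup of the L²(𝕋) norm of u(t,·) is bounded by a constant depending only on γ and the L²(𝕋) norm of f. -/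
open scoped BigOperators

lemma aux_inner (a b : ℂ) : inner ℝ a b = a.re * b.re + a.im * b.im := by
  rw [Complex.inner]; simp; ring

lemma aux_alg (γ r : ℝ) (hγ : 0 < γ) (a b c F : ℂ)
    (h : Complex.I * b + c - (r : ℂ) * a + Complex.I * (γ : ℂ) * a = F) :
    2 * inner ℝ a b ≤ 2 * inner ℝ a (Complex.I * c) - γ * ‖a‖ ^ 2 + γ⁻¹ * ‖F‖ ^ 2 := by
  rw [aux_inner, aux_inner, Complex.sq_norm, Complex.sq_norm, Complex.normSq_apply,
    Complex.normSq_apply]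
  have h1 := congrArg Complex.re h
  have h2 := congrArg Complex.im h
  simp at h1 h2 ⊢
  have e1 : b.im = c.re - r * a.re - γ * a.im - F.re := by linarith
  have e2 : b.re = F.im - c.im + r * a.im - γ * a.re := by linarith
  rw [e1, e2]
  have h3 : 0 ≤ γ * ((a.re - γ⁻¹ * F.im) ^ 2 + (a.im + γ⁻¹ * F.re) ^ 2) := by positivity
  have h4 : γ * ((a.re - γ⁻¹ * F.im) ^ 2 + (a.im + γ⁻¹ * F.re) ^ 2)
    = γ * (a.re * a.re + a.im * a.im) - 2 * (a.re * F.im - a.im * F.re)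
      + γ⁻¹ * (F.re * F.re + F.im * F.im) := by
    field_simp
    ring
  rw [h4] at h3
  linarith

lemma aux_dx (u : ℝ → ℝ → ℂ)
    (hsmooth : ContDiff ℝ (⊤ : ℕ∞) (fun q : ℝ × ℝ => u q.1 q.2))
    (hper : ∀ t x : ℝ, u t (x + 2 * Real.pi) = u t x) (t : ℝ) :
    Continuous (deriv (deriv (fun y => u t y))) ∧
    ∫ x in (0:ℝ)..(2 * Real.pi),
      2 * inner ℝ (u t x) (Complex.I * deriv (deriv (fun y => u t y)) x) = 0 := by
  have hs : ContDiff ℝ (⊤ : ℕ∞) (u t) := hsmooth.comp (contDiff_const.prodMk contDiff_id)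
  change Continuous (deriv (deriv (u t))) ∧ ∫ x in (0:ℝ)..(2 * Real.pi),
      2 * inner ℝ (u t x) (Complex.I * deriv (deriv (u t)) x) = 0
  have hs1 : ContDiff ℝ (⊤ : ℕ∞) (deriv (u t)) := (contDiff_infty_iff_deriv.1 hs).2
  have hs2 : ContDiff ℝ (⊤ : ℕ∞) (deriv (deriv (u t))) := (contDiff_infty_iff_deriv.1 hs1).2
  have c2 := hs2.continuous
  have c0 := hs.continuous
  refine ⟨c2, ?_⟩
  have hW : ∀ x, HasDerivAt (fun x => 2 * inner ℝ (u t x) (Complex.I * deriv (u t) x))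
      (2 * inner ℝ (u t x) (Complex.I * deriv (deriv (u t)) x)) x := by
    intro x
    have d0 : HasDerivAt (u t) (deriv (u t) x) x :=
      (hs.differentiable (by simp) x).hasDerivAt
    have d1 : HasDerivAt (deriv (u t)) (deriv (deriv (u t)) x) x :=
      (hs1.differentiable (by simp) x).hasDerivAt
    have key := (d0.inner ℝ (d1.const_mul Complex.I)).const_mul 2
    have h0 : inner ℝ (deriv (u t) x) (Complex.I * deriv (u t) x) = 0 := by
      rw [aux_inner]; simp; ring
    rw [h0, add_zero] at key
    exact key
  rw [intervalIntegral.integral_eq_sub_of_hasDerivAt (fun x _ => hW x)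
    (Continuous.intervalIntegrable (by fun_prop) _ _)]
  have hp0 : u t (2 * Real.pi) = u t 0 := by simpa using hper t 0
  have hp1 : deriv (u t) (2 * Real.pi) = deriv (u t) 0 := by
    have h := deriv_comp_add_const (f := u t) (2 * Real.pi) 0
    rw [show (fun x => u t (x + 2 * Real.pi)) = u t from funext (hper t)] at h
    simpa using h.symm
  rw [hp0, hp1, sub_self]

lemma aux_dt (u : ℝ → ℝ → ℂ)
    (hsmooth : ContDiff ℝ (⊤ : ℕ∞) (fun q : ℝ × ℝ => u q.1 q.2)) (t : ℝ) :
    Continuous (fun x => deriv (fun r => u r x) t) ∧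
    HasDerivAt (fun t => ∫ x in (0:ℝ)..(2 * Real.pi), ‖u t x‖^2)
      (∫ x in (0:ℝ)..(2 * Real.pi), 2 * inner ℝ (u t x) (deriv (fun r => u r x) t)) t := by
  have cu : Continuous (fun q : ℝ × ℝ => u q.1 q.2) := hsmooth.continuous
  have hd : ∀ t x, HasDerivAt (fun r => u r x)
      (fderiv ℝ (fun q : ℝ × ℝ => u q.1 q.2) (t, x) (1, 0)) t := by
    intro t x
    have h1 := (hsmooth.differentiable (by simp) (t, x)).hasFDerivAt
    have h2 : HasDerivAt (fun r : ℝ => (r, x)) ((1 : ℝ), (0 : ℝ)) t :=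
      (hasDerivAt_id t).prodMk (hasDerivAt_const t x)
    exact h1.comp_hasDerivAt t h2
  have cd : Continuous (fun q : ℝ × ℝ => deriv (fun r => u r q.2) q.1) := by
    have : (fun q : ℝ × ℝ => deriv (fun r => u r q.2) q.1)
      = fun q => fderiv ℝ (fun q : ℝ × ℝ => u q.1 q.2) q (1, 0) := by
      funext q; exact (hd q.1 q.2).deriv
    rw [this]
    exact (hsmooth.continuous_fderiv (by simp)).clm_apply continuous_const
  have cut : ∀ t, Continuous (u t) := fun t => cu.comp (Continuous.prodMk_right t)
  have cdt : ∀ t, Continuous (fun x => deriv (fun r => u r x) t) :=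
    fun t => cd.comp (Continuous.prodMk_right t)
  refine ⟨cdt t, ?_⟩
  have cG : Continuous (fun q : ℝ × ℝ =>
      2 * inner ℝ (u q.1 q.2) (deriv (fun r => u r q.2) q.1)) := by fun_prop
  obtain ⟨C, hC⟩ := ((isCompact_Icc (a := t - 1) (b := t + 1)).prod
    (isCompact_uIcc (a := (0:ℝ)) (b := 2 * Real.pi))).exists_bound_of_continuousOn
      cG.continuousOn
  refine (intervalIntegral.hasDerivAt_integral_of_dominated_loc_of_deriv_le
    (F := fun t x => ‖u t x‖^2)
    (F' := fun t x => 2 * inner ℝ (u t x) (deriv (fun r => u r x) t))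
    (s := Set.Icc (t - 1) (t + 1)) (bound := fun _ => C)
    (Icc_mem_nhds (by linarith) (by linarith)) ?_ ?_ ?_ ?_ ?_ ?_).2
  · exact Filter.Eventually.of_forall fun s =>
      ((cut s).norm.pow 2).aestronglyMeasurable
  · exact ((cut t).norm.pow 2).intervalIntegrable _ _
  · exact (cG.comp (Continuous.prodMk_right t)).aestronglyMeasurable
  · exact Filter.Eventually.of_forall fun x hx s hs =>
      hC (s, x) ⟨hs, Set.uIoc_subset_uIcc hx⟩
  · exact intervalIntegrable_const
  · refine Filter.Eventually.of_forall fun x hx s hs => ?_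
    have := hd s x
    rw [← this.deriv] at this
    exact this.norm_sq



/-- Asymptotic `L²` bound for the periodic forced–damped defocusing p-NLS:
`limsup_{t→∞} ∫₀^{2π}|u(t)|² dx ≤ γ⁻² ∫₀^{2π}|f|² dx`. -/
theorem stmt11 (p : ℕ) (hp : Odd p) (hp1 : 1 < p) (γ : ℝ) (hγ : 0 < γ)
    (f : ℝ → ℂ) (hf : Continuous f) (hfper : Function.Periodic f (2 * Real.pi))
    (u : ℝ → ℝ → ℂ)
    (hsmooth : ContDiff ℝ (⊤ : ℕ∞) (fun q : ℝ × ℝ => u q.1 q.2))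
    (hper : ∀ t x : ℝ, u t (x + 2 * Real.pi) = u t x)
    (heq : ∀ t : ℝ, 0 ≤ t → ∀ x : ℝ,
      Complex.I * deriv (fun r => u r x) t
        + deriv (deriv (fun y => u t y)) x
        - (‖u t x‖ : ℂ) ^ (p - 1) * u t x
        + Complex.I * (γ : ℂ) * u t x = f x) :
    Filter.limsup (fun t : ℝ => ∫ x in (0:ℝ)..(2 * Real.pi), ‖u t x‖^2) Filter.atTop
      ≤ (γ^2)⁻¹ * ∫ x in (0:ℝ)..(2 * Real.pi), ‖f x‖^2 := by
  have hF := hfper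
  set M : ℝ → ℝ := fun t => ∫ x in (0:ℝ)..(2 * Real.pi), ‖u t x‖^2 with hM
  set K : ℝ := ∫ x in (0:ℝ)..(2 * Real.pi), ‖f x‖^2 with hK
  have cu : Continuous (fun q : ℝ × ℝ => u q.1 q.2) := hsmooth.continuous
  have cut : ∀ t, Continuous (u t) := fun t => cu.comp (Continuous.prodMk_right t)
  have pi2 : (0:ℝ) ≤ 2 * Real.pi := by positivity
  have hM' : ∀ t, ∃ m, HasDerivAt M m t ∧ (0 ≤ t → m ≤ - γ * M t + γ⁻¹ * K) := by
    intro t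
    obtain ⟨c1, d1⟩ := aux_dt u hsmooth t
    obtain ⟨c2, i2⟩ := aux_dx u hsmooth hper t
    refine ⟨_, d1, fun ht => ?_⟩
    have ct := cut t
    have I1 : IntervalIntegrable (fun x => 2 * inner ℝ (u t x)
        (Complex.I * deriv (deriv (fun y => u t y)) x)) MeasureTheory.volume 0 (2 * Real.pi) :=
      Continuous.intervalIntegrable (by fun_prop) _ _
    have I2 : IntervalIntegrable (fun x => γ * ‖u t x‖ ^ 2)
        MeasureTheory.volume 0 (2 * Real.pi) :=
      Continuous.intervalIntegrable (by fun_prop) _ _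
    have I3 : IntervalIntegrable (fun x => γ⁻¹ * ‖f x‖ ^ 2)
        MeasureTheory.volume 0 (2 * Real.pi) :=
      Continuous.intervalIntegrable (by fun_prop) _ _
    have key := intervalIntegral.integral_mono pi2
      (f := fun x => 2 * inner ℝ (u t x) (deriv (fun r => u r x) t))
      (Continuous.intervalIntegrable (by fun_prop) _ _) ((I1.sub I2).add I3)
      (fun x => aux_alg γ (‖u t x‖ ^ (p - 1)) hγ _ _ _ _
        (by have := heq t ht x; push_cast; exact this))
    refine key.trans (le_of_eq ?_)
    rw [intervalIntegral.integral_add (I1.sub I2) I3, intervalIntegral.integral_sub I1 I2, i2,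
      intervalIntegral.integral_const_mul, intervalIntegral.integral_const_mul]
    simp only [hM, hK]; ring
  set B : ℝ := (γ^2)⁻¹ * K with hB
  choose m hm hm' using hM'
  have hg : ∀ t, HasDerivAt (fun t => Real.exp (γ * t) * (M t - B))
      (Real.exp (γ * t) * (γ * (M t - B) + m t)) t := by
    intro t
    have h1 : HasDerivAt (fun t => Real.exp (γ * t)) (Real.exp (γ * t) * (γ * 1)) t :=
      ((hasDerivAt_id t).const_mul γ).exp
    have h2 := h1.mul ((hm t).sub_const B)
    refine h2.congr_deriv ?_
    ring
  have anti : AntitoneOn (fun t => Real.exp (γ * t) * (M t - B)) (Set.Ici 0) := by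
    refine antitoneOn_of_deriv_nonpos (convex_Ici 0)
      (fun t _ => (hg t).continuousAt.continuousWithinAt)
      (fun t _ => (hg t).differentiableAt.differentiableWithinAt) fun t ht => ?_
    rw [interior_Ici] at ht
    rw [(hg t).deriv]
    refine mul_nonpos_of_nonneg_of_nonpos (Real.exp_pos _).le ?_
    have := hm' t (le_of_lt ht)
    have e : γ * B = γ⁻¹ * K := by rw [hB]; field_simp
    nlinarith
  have bnd : ∀ t, 0 ≤ t → M t ≤ Real.exp (-(γ * t)) * (M 0 - B) + B := by
    intro t ht
    have h := anti (Set.mem_Ici.2 le_rfl) (Set.mem_Ici.2 ht) ht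
    simp only [mul_zero, Real.exp_zero, one_mul] at h
    have h2 := mul_le_mul_of_nonneg_left h (Real.exp_pos (-(γ * t))).le
    rw [← mul_assoc, ← Real.exp_add, neg_add_cancel, Real.exp_zero, one_mul] at h2
    linarith
  have lim : Filter.Tendsto (fun t => Real.exp (-(γ * t)) * (M 0 - B) + B) Filter.atTop
      (nhds B) := by
    have h1 : Filter.Tendsto (fun t => Real.exp (-(γ * t))) Filter.atTop (nhds 0) :=
      Real.tendsto_exp_neg_atTop_nhds_zero.comp
        (Filter.tendsto_id.const_mul_atTop hγ)
    simpa using (h1.mul_const (M 0 - B)).add_const B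
  rw [← lim.limsup_eq]
  refine Filter.limsup_le_limsup ?_ ?_ lim.isBoundedUnder_le
  · filter_upwards [Filter.eventually_ge_atTop 0] with t ht using bnd t ht
  · refine Filter.IsBoundedUnder.isCoboundedUnder_le ⟨0, ?_⟩
    refine Filter.eventually_map.2 (Filter.Eventually.of_forall fun t => ?_)
    exact intervalIntegral.integral_nonneg pi2 fun x _ => by positivity
end

section
/- Let p > 1 be odd, γ ∈ ℝ, let f : ℝ → ℂ be continuously differentiable and 2π-periodic, and let u = u(t,x) be a smooth function, 2π-periodic in x, satisfying i∂ₜu + ∂ₓ²u − |u|^{p−1}u + iγu = f(x) pointwise. Define the energy E(t) := (1/2)∫₀^{2π} |∂ₓu(t,x)|² dx + (1/(p+1))∫₀^{2π} |u(t,x)|^{p+1} dx. Then for every t: E'(t) = −γ ( ∫₀^{2π} |∂ₓu(t,x)|² dx + ∫₀^{2π} |u(t,x)|^{p+1} dx ) + ∫₀^{2π} Im( f'(x) · conj(∂ₓu(t,x)) ) dx + ∫₀^{2π} Im( f(x) · |u(t,x)|^{p−1} · conj(u(t,x)) ) dx. -/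
open scoped BigOperators

lemma aux_param (G G' : ℝ × ℝ → ℝ) (hG : Continuous G) (hG' : Continuous G')
    (hd : ∀ t x, HasDerivAt (fun r => G (r, x)) (G' (t, x)) t) (a b t : ℝ) :
    HasDerivAt (fun r => ∫ x in a..b, G (r, x)) (∫ x in a..b, G' (t, x)) t := by
  have hK : IsCompact (Metric.closedBall t 1 ×ˢ Set.uIcc a b) :=
    (isCompact_closedBall t 1).prod isCompact_uIcc
  obtain ⟨C, hC⟩ := hK.exists_bound_of_continuousOn hG'.continuousOn
  refine (intervalIntegral.hasDerivAt_integral_of_dominated_loc_of_deriv_le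
    (F := fun r x => G (r, x)) (F' := fun r x => G' (r, x)) (bound := fun _ => C)
    (s := Metric.closedBall t 1) (Metric.closedBall_mem_nhds t one_pos) ?_ ?_ ?_ ?_ ?_ ?_).2
  · exact Filter.Eventually.of_forall fun r =>
      (Continuous.aestronglyMeasurable (by fun_prop))
  · exact Continuous.intervalIntegrable (by fun_prop) _ _
  · exact (Continuous.aestronglyMeasurable (by fun_prop))
  · refine Filter.Eventually.of_forall fun x hx r hr => hC (r, x) ⟨hr, Set.uIoc_subset_uIcc hx⟩
  · exact intervalIntegrable_const
  · exact Filter.Eventually.of_forall fun x _ r _ => hd r x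

lemma aux_dir (U : ℝ × ℝ → ℂ) (hU : ContDiff ℝ (⊤ : ℕ∞) U) (v : ℝ × ℝ) :
    ContDiff ℝ (⊤ : ℕ∞) (fun q => fderiv ℝ U q v) :=
  (hU.fderiv_right (m := (⊤ : ℕ∞)) (by simp)).clm_apply contDiff_const

lemma aux_t (U : ℝ × ℝ → ℂ) (hU : ContDiff ℝ (⊤ : ℕ∞) U) (t x : ℝ) :
    HasDerivAt (fun r => U (r, x)) (fderiv ℝ U (t, x) (1, 0)) t := by
  have h := ((hU.differentiable (by simp)) (t, x)).hasFDerivAt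
  exact h.comp_hasDerivAt t ((hasDerivAt_id t).prodMk (hasDerivAt_const t x))

lemma aux_x (U : ℝ × ℝ → ℂ) (hU : ContDiff ℝ (⊤ : ℕ∞) U) (t x : ℝ) :
    HasDerivAt (fun y => U (t, y)) (fderiv ℝ U (t, x) (0, 1)) x := by
  have h := ((hU.differentiable (by simp)) (t, x)).hasFDerivAt
  exact h.comp_hasDerivAt x ((hasDerivAt_const x t).prodMk (hasDerivAt_id x))

lemma aux_symm (U : ℝ × ℝ → ℂ) (hU : ContDiff ℝ (⊤ : ℕ∞) U) (q v w : ℝ × ℝ) :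
    fderiv ℝ (fun q => fderiv ℝ U q v) q w = fderiv ℝ (fun q => fderiv ℝ U q w) q v := by
  have hs : IsSymmSndFDerivAt ℝ U q :=
    (hU.contDiffAt).isSymmSndFDerivAt (by simp; exact WithTop.coe_le_coe.2 (le_top : (2 : ℕ∞) ≤ ⊤))
  have hd : DifferentiableAt ℝ (fderiv ℝ U) q :=
    ((hU.fderiv_right (m := (⊤ : ℕ∞)) (by simp)).differentiable (by simp)) q
  rw [fderiv_clm_apply hd (by fun_prop), fderiv_clm_apply hd (by fun_prop)]
  simpa using hs w v

lemma aux_re {g : ℝ → ℂ} {g' : ℂ} {t : ℝ} (h : HasDerivAt g g' t) :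
    HasDerivAt (fun r => (g r).re) g'.re t :=
  Complex.reCLM.hasFDerivAt.comp_hasDerivAt t h

lemma aux_sq {g : ℝ → ℂ} {g' : ℂ} {t : ℝ} (h : HasDerivAt g g' t) :
    HasDerivAt (fun r => ‖g r‖ ^ 2) (2 * ((starRingEnd ℂ) (g t) * g').re) t := by
  have := h.norm_sq
  convert this using 2
  simp [Complex.inner]
  try ring

/-- Energy identity for the periodic forced–damped defocusing p-NLS:
`E'(t) = −γ(∫|∂ₓu|² + ∫|u|^{p+1}) + ∫ Im(f' conj ∂ₓu) + ∫ Im(f |u|^{p−1} conj u)`,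
where `E(t) = ½∫|∂ₓu|² + (1/(p+1))∫|u|^{p+1}`. -/
theorem stmt12 (p : ℕ) (hp : Odd p) (hp1 : 1 < p) (γ : ℝ)
    (f : ℝ → ℂ) (hf : ContDiff ℝ 1 f) (hfper : Function.Periodic f (2 * Real.pi))
    (u : ℝ → ℝ → ℂ)
    (hsmooth : ContDiff ℝ (⊤ : ℕ∞) (fun q : ℝ × ℝ => u q.1 q.2))
    (hper : ∀ t x : ℝ, u t (x + 2 * Real.pi) = u t x)
    (heq : ∀ t x : ℝ,
      Complex.I * deriv (fun r => u r x) t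
        + deriv (deriv (fun y => u t y)) x
        - (‖u t x‖ : ℂ) ^ (p - 1) * u t x
        + Complex.I * (γ : ℂ) * u t x = f x) :
    ∀ t : ℝ, HasDerivAt
      (fun r => (1/2) * (∫ x in (0:ℝ)..(2 * Real.pi), ‖deriv (fun y => u r y) x‖^2)
        + (1/((p:ℝ) + 1)) * ∫ x in (0:ℝ)..(2 * Real.pi), ‖u r x‖^(p+1))
      (-γ * ((∫ x in (0:ℝ)..(2 * Real.pi), ‖deriv (fun y => u t y) x‖^2)
            + ∫ x in (0:ℝ)..(2 * Real.pi), ‖u t x‖^(p+1))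
        + (∫ x in (0:ℝ)..(2 * Real.pi),
            (deriv f x * (starRingEnd ℂ) (deriv (fun y => u t y) x)).im)
        + ∫ x in (0:ℝ)..(2 * Real.pi),
            (f x * (‖u t x‖ : ℂ)^(p-1) * (starRingEnd ℂ) (u t x)).im) t := by
  intro t
  obtain ⟨k, rfl⟩ := hp
  set U : ℝ × ℝ → ℂ := fun q => u q.1 q.2 with hUdef
  obtain ⟨X, hX⟩ : ∃ X : ℝ × ℝ → ℂ, X = fun q => fderiv ℝ U q (0, 1) := ⟨_, rfl⟩
  obtain ⟨T, hT⟩ : ∃ T : ℝ × ℝ → ℂ, T = fun q => fderiv ℝ U q (1, 0) := ⟨_, rfl⟩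
  obtain ⟨XX, hXX⟩ : ∃ XX : ℝ × ℝ → ℂ, XX = fun q => fderiv ℝ X q (0, 1) := ⟨_, rfl⟩
  obtain ⟨XT, hXT⟩ : ∃ XT : ℝ × ℝ → ℂ, XT = fun q => fderiv ℝ X q (1, 0) := ⟨_, rfl⟩
  have sX : ContDiff ℝ (⊤ : ℕ∞) X := hX ▸ aux_dir U hsmooth _
  have sT : ContDiff ℝ (⊤ : ℕ∞) T := hT ▸ aux_dir U hsmooth _
  have sXX : ContDiff ℝ (⊤ : ℕ∞) XX := hXX ▸ aux_dir X sX _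
  have sXT : ContDiff ℝ (⊤ : ℕ∞) XT := hXT ▸ aux_dir X sX _
  have cU := hsmooth.continuous
  have cX := sX.continuous
  have cT := sT.continuous
  have cXX := sXX.continuous
  have cXT := sXT.continuous
  have cf := hf.continuous
  have cf' : Continuous (deriv f) := hf.continuous_deriv (by simp)
  have dUx : ∀ t x, HasDerivAt (fun y => U (t, y)) (X (t, x)) x := fun t x => by
    rw [hX]; exact aux_x U hsmooth t x
  have dUt : ∀ t x, HasDerivAt (fun y => U (y, x)) (T (t, x)) t := fun t x => by
    rw [hT]; exact aux_t U hsmooth t x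
  have dXx : ∀ t x, HasDerivAt (fun y => X (t, y)) (XX (t, x)) x := fun t x => by
    rw [hXX]; exact aux_x X sX t x
  have dXt : ∀ t x, HasDerivAt (fun y => X (y, x)) (XT (t, x)) t := fun t x => by
    rw [hXT]; exact aux_t X sX t x
  have dTx : ∀ t x, HasDerivAt (fun y => T (t, y)) (XT (t, x)) x := fun t x => by
    have h := aux_x T sT t x
    have e : XT (t, x) = fderiv ℝ T (t, x) (0, 1) := by
      rw [hXT, hX, hT]; exact aux_symm U hsmooth _ _ _
    rw [e]; exact h
  have df : ∀ x, HasDerivAt f (deriv f x) x := fun x =>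
    (hf.differentiable (by simp) x).hasDerivAt
  have e1 : ∀ t, (deriv fun y => u t y) = fun x => X (t, x) := fun t =>
    funext fun x => (dUx t x).deriv
  have e2 : ∀ t x, deriv (fun r => u r x) t = T (t, x) := fun t x => (dUt t x).deriv
  have e3 : ∀ t x, u t x = U (t, x) := fun _ _ => rfl
  have pX : X (t, 2 * Real.pi) = X (t, 0) := by
    rw [← (dUx t (2 * Real.pi)).deriv, ← (dUx t 0).deriv]
    have : (fun y => U (t, y)) = fun y => U (t, y + 2 * Real.pi) :=
      funext fun y => (hper t y).symm
    conv_rhs => rw [this, deriv_comp_add_const (fun y => U (t, y)), zero_add]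
  have pU : U (t, 2 * Real.pi) = U (t, 0) := by simpa using hper t 0
  have pT : T (t, 2 * Real.pi) = T (t, 0) := by
    rw [← (dUt t (2 * Real.pi)).deriv, ← (dUt t 0).deriv]
    congr 1
    funext r
    simpa using hper r 0
  have pf : f (2 * Real.pi) = f 0 := by simpa using hfper 0
  have e4 : ∀ x, Complex.I * T (t, x) + XX (t, x) - (‖U (t, x)‖ : ℂ) ^ (2 * k) * U (t, x)
      + Complex.I * γ * U (t, x) = f x := fun x => by
    have := heq t x
    rw [e1, e2, (dXx t x).deriv] at this
    exact this
  simp only [e1]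
  simp only [e3]
  clear heq
  clear_value U
  have hk : 2 * k + 1 - 1 = 2 * k := by simp
  rw [hk]
  have D1 := aux_param (fun q => ‖X q‖ ^ 2)
    (fun q => 2 * ((starRingEnd ℂ) (X q) * XT q).re) (by fun_prop)
    (by have := Complex.continuous_conj; fun_prop) (fun t x => aux_sq (dXt t x)) 0 (2 * Real.pi) t
  have D2 := aux_param (fun q => ‖U q‖ ^ (2 * k + 1 + 1))
    (fun q => ((2 * k + 1 : ℕ) + 1 : ℝ) * (‖U q‖ ^ (2 * k) * ((starRingEnd ℂ) (U q) * T q).re))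
    (by fun_prop) (by fun_prop)
    (fun t x => by
      have := (aux_sq (dUt t x)).pow (k + 1)
      have e : ∀ r : ℝ, r ^ (2 * k + 1 + 1) = (r ^ 2) ^ (k + 1) := fun r => by ring
      have e' : (fun r => ‖U (r, x)‖ ^ (2 * k + 1 + 1)) = (fun r => ‖U (r, x)‖ ^ 2) ^ (k + 1) :=
        funext fun r => e _
      refine HasDerivAt.congr_deriv (e' ▸ this) ?_
      simp only [Nat.add_sub_cancel, pow_mul]
      push_cast
      ring) 0 (2 * Real.pi) t
  refine ((D1.const_mul (1/2)).add (D2.const_mul (1 / (((2 * k + 1 : ℕ) : ℝ) + 1)))).congr_deriv ?_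
  have hne : (((2 * k + 1 : ℕ) : ℝ) + 1) ≠ 0 := by positivity
  rw [intervalIntegral.integral_const_mul, intervalIntegral.integral_const_mul, ← mul_assoc,
    ← mul_assoc, one_div_mul_cancel hne, one_div_mul_cancel two_ne_zero, one_mul, one_mul]
  have ftc := intervalIntegral.integral_eq_sub_of_hasDerivAt (a := 0) (b := 2 * Real.pi)
    (f := fun x => ((starRingEnd ℂ) (X (t, x)) * (T (t, x) + γ * U (t, x) + Complex.I * f x)).re)
    (f' := fun x => ((starRingEnd ℂ) (XX (t, x)) * (T (t, x) + γ * U (t, x) + Complex.I * f x)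
      + (starRingEnd ℂ) (X (t, x)) * (XT (t, x) + γ * X (t, x) + Complex.I * deriv f x)).re)
    (fun x _ => aux_re ((dXx t x).star.mul
      (((dTx t x).add ((dUx t x).const_mul (γ : ℂ))).add ((df x).const_mul Complex.I))))
    (Continuous.intervalIntegrable (by fun_prop) _ _)
  simp only [pX, pU, pT, pf, sub_self] at ftc
  have I1 : IntervalIntegrable (fun x => ‖X (t, x)‖ ^ 2) MeasureTheory.volume 0 (2 * Real.pi) :=
    Continuous.intervalIntegrable (by fun_prop) _ _
  have I2 : IntervalIntegrable (fun x => ‖U (t, x)‖ ^ (2 * k + 1 + 1))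
      MeasureTheory.volume 0 (2 * Real.pi) :=
    Continuous.intervalIntegrable (by fun_prop) _ _
  have I3 : IntervalIntegrable (fun x => (deriv f x * (starRingEnd ℂ) (X (t, x))).im)
      MeasureTheory.volume 0 (2 * Real.pi) :=
    Continuous.intervalIntegrable (by fun_prop) _ _
  have I4 : IntervalIntegrable
      (fun x => (f x * (‖U (t, x)‖ : ℂ) ^ (2 * k) * (starRingEnd ℂ) (U (t, x))).im)
      MeasureTheory.volume 0 (2 * Real.pi) :=
    Continuous.intervalIntegrable (by fun_prop) _ _
  have I5 : IntervalIntegrable (fun x => ((starRingEnd ℂ) (X (t, x)) * XT (t, x)).re)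
      MeasureTheory.volume 0 (2 * Real.pi) :=
    Continuous.intervalIntegrable (by fun_prop) _ _
  have I6 : IntervalIntegrable
      (fun x => ‖U (t, x)‖ ^ (2 * k) * ((starRingEnd ℂ) (U (t, x)) * T (t, x)).re)
      MeasureTheory.volume 0 (2 * Real.pi) :=
    Continuous.intervalIntegrable (by fun_prop) _ _
  rw [← intervalIntegral.integral_add I5 I6, ← intervalIntegral.integral_add I1 I2,
    ← intervalIntegral.integral_const_mul,
    ← intervalIntegral.integral_add ((I1.add I2).const_mul (-γ)) I3,
    ← intervalIntegral.integral_add (((I1.add I2).const_mul (-γ)).add I3) I4,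
    ← sub_eq_zero,
    ← intervalIntegral.integral_sub (I5.add I6) ((((I1.add I2).const_mul (-γ)).add I3).add I4)]
  refine Eq.trans ?_ ftc
  apply intervalIntegral.integral_congr
  intro x _
  have h := e4 x
  have hn : ‖U (t, x)‖ ^ (2 * k + 1 + 1)
      = ‖U (t, x)‖ ^ (2 * k) * ((U (t, x)).re ^ 2 + (U (t, x)).im ^ 2) := by
    rw [add_assoc, pow_add]; congr 1
    rw [← Complex.normSq_eq_norm_sq, Complex.normSq_apply]; ring
  have hn2 : ‖X (t, x)‖ ^ 2 = (X (t, x)).re ^ 2 + (X (t, x)).im ^ 2 := by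
    rw [← Complex.normSq_eq_norm_sq, Complex.normSq_apply]; ring
  simp only [hn, hn2]
  rw [← Complex.ofReal_pow] at h ⊢
  generalize ‖U (t, x)‖ ^ (2 * k) = N at *
  have hr := congrArg Complex.re h
  have hi := congrArg Complex.im h
  simp at hr hi ⊢
  rw [← hr, ← hi]
  ring
end

section
/- Let p ≥ 5 be odd and γ > 0. There exists a constant C, depending only on p, γ, ∫₀^{2π}|f|²dx and ∫₀^{2π}|f'|²dx, such that the following holds: for every continuously differentiable 2π-periodic f : ℝ → ℂ and every smooth u = u(t,x), defined for all t ≥ 0 and 2π-periodic in x, satisfying i∂ₜu + ∂ₓ²u − |u|^{p−1}u + iγu = f(x) pointwise, one has limsup_{t→∞} ( (1/2)∫₀^{2π} |∂ₓu(t,x)|² dx + (1/(p+1))∫₀^{2π} |u(t,x)|^{p+1} dx ) ≤ C. Combined with the L² bound, limsup_{t→∞} ( ∫₀^{2π} |u(t,x)|² dx + ∫₀^{2π} |∂ₓu(t,x)|² dx ) is bounded by a constant depending only on p, γ and the H¹(𝕋) norm of f; i.e. the equation admits an absorbing set in H¹(𝕋). -/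
open scoped BigOperators

noncomputable def ptd (A : ℝ × ℝ → ℝ) (q : ℝ × ℝ) : ℝ := fderiv ℝ A q (1, 0)
noncomputable def pxd (A : ℝ × ℝ → ℝ) (q : ℝ × ℝ) : ℝ := fderiv ℝ A q (0, 1)

lemma ptd_smooth {A : ℝ × ℝ → ℝ} (hA : ContDiff ℝ (⊤ : ℕ∞) A) : ContDiff ℝ (⊤ : ℕ∞) (ptd A) :=
  (hA.fderiv_right (m := (⊤ : ℕ∞)) (by simp)).clm_apply contDiff_const

lemma pxd_smooth {A : ℝ × ℝ → ℝ} (hA : ContDiff ℝ (⊤ : ℕ∞) A) : ContDiff ℝ (⊤ : ℕ∞) (pxd A) :=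
  (hA.fderiv_right (m := (⊤ : ℕ∞)) (by simp)).clm_apply contDiff_const

lemma pxd_hasDeriv {A : ℝ × ℝ → ℝ} (hA : ContDiff ℝ (⊤ : ℕ∞) A) (t x : ℝ) :
    HasDerivAt (fun y => A (t, y)) (pxd A (t, x)) x := by
  have h1 : HasFDerivAt A (fderiv ℝ A (t, x)) (t, x) :=
    (hA.differentiable (by simp) (t, x)).hasFDerivAt
  have h2 : HasDerivAt (fun y : ℝ => (t, y)) ((0 : ℝ), (1 : ℝ)) x :=
    (hasDerivAt_const x t).prodMk (hasDerivAt_id x)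
  exact h1.comp_hasDerivAt x h2

lemma ptd_hasDeriv {A : ℝ × ℝ → ℝ} (hA : ContDiff ℝ (⊤ : ℕ∞) A) (t x : ℝ) :
    HasDerivAt (fun s => A (s, x)) (ptd A (t, x)) t := by
  have h1 : HasFDerivAt A (fderiv ℝ A (t, x)) (t, x) :=
    (hA.differentiable (by simp) (t, x)).hasFDerivAt
  have h2 : HasDerivAt (fun s : ℝ => (s, x)) ((1 : ℝ), (0 : ℝ)) t :=
    (hasDerivAt_id t).prodMk (hasDerivAt_const t x)
  exact h1.comp_hasDerivAt t h2

lemma ptd_pxd {A : ℝ × ℝ → ℝ} (hA : ContDiff ℝ (⊤ : ℕ∞) A) (q : ℝ × ℝ) :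
    ptd (pxd A) q = pxd (ptd A) q := by
  have hs : IsSymmSndFDerivAt ℝ A q :=
    (hA.contDiffAt (x := q)).isSymmSndFDerivAt (by
      rw [minSmoothness_of_isRCLikeNormedField]
      exact WithTop.coe_le_coe.2 (le_top : (2 : ℕ∞) ≤ ⊤))
  have hd : DifferentiableAt ℝ (fderiv ℝ A) q :=
    (hA.fderiv_right (m := (⊤ : ℕ∞)) (by simp)).differentiable (by simp) q
  have key : ∀ v w : ℝ × ℝ, fderiv ℝ (fun r => fderiv ℝ A r v) q w
      = fderiv ℝ (fderiv ℝ A) q w v := by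
    intro v w
    rw [fderiv_clm_apply hd (differentiableAt_const v)]
    simp
  unfold ptd pxd
  rw [key, key]
  exact hs _ _

lemma pxd_per {A : ℝ × ℝ → ℝ} (L : ℝ) (h : ∀ t x, A (t, x + L) = A (t, x)) (t x : ℝ) :
    pxd A (t, x + L) = pxd A (t, x) := by
  have h1 : (fun q : ℝ × ℝ => A (q + (0, L))) = A := by
    funext q; obtain ⟨a, b⟩ := q; simpa using h a b
  unfold pxd
  conv_rhs => rw [← h1]
  rw [fderiv_comp_add_right]
  simp

lemma ptd_per {A : ℝ × ℝ → ℝ} (L : ℝ) (h : ∀ t x, A (t, x + L) = A (t, x)) (t x : ℝ) :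
    ptd A (t, x + L) = ptd A (t, x) := by
  have h1 : (fun q : ℝ × ℝ => A (q + (0, L))) = A := by
    funext q; obtain ⟨a, b⟩ := q; simpa using h a b
  unfold ptd
  conv_rhs => rw [← h1]
  rw [fderiv_comp_add_right]
  simp

lemma integral_hasDeriv {g : ℝ × ℝ → ℝ} (hg : ContDiff ℝ (⊤ : ℕ∞) g) (a b t : ℝ) :
    HasDerivAt (fun s => ∫ x in a..b, g (s, x)) (∫ x in a..b, ptd g (t, x)) t := by
  have hc : Continuous g := hg.continuous
  have hc' : Continuous (ptd g) := (ptd_smooth hg).continuous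
  obtain ⟨M, hM⟩ := ((isCompact_Icc (a := t - 1) (b := t + 1)).prod
    (isCompact_uIcc (a := a) (b := b))).exists_bound_of_continuousOn hc'.continuousOn
  refine (intervalIntegral.hasDerivAt_integral_of_dominated_loc_of_deriv_le
    (F := fun s x => g (s, x)) (F' := fun s x => ptd g (s, x)) (bound := fun _ => M)
    (s := Set.Icc (t - 1) (t + 1)) (Icc_mem_nhds (by linarith) (by linarith))
    ?_ ?_ ?_ ?_ ?_ ?_).2
  · exact Filter.Eventually.of_forall fun s => (hc.comp (by fun_prop)).aestronglyMeasurable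
  · exact (hc.comp (by fun_prop : Continuous fun x : ℝ => (t, x))).intervalIntegrable _ _
  · exact (hc'.comp (by fun_prop)).aestronglyMeasurable
  · refine Filter.Eventually.of_forall fun x hx s hs => hM (s, x) ⟨hs, Set.uIoc_subset_uIcc hx⟩
  · exact intervalIntegrable_const
  · exact Filter.Eventually.of_forall fun x _ s _ => ptd_hasDeriv hg s x

lemma gronwall_ev {G G' : ℝ → ℝ} {γ K : ℝ} (hγ : 0 < γ) (hG : ∀ t, HasDerivAt G (G' t) t)
    (hle : ∀ t, 0 ≤ t → G' t ≤ -γ * G t + K) :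
    ∀ᶠ t in Filter.atTop, G t ≤ K / γ + 1 := by
  have hd : ∀ t, HasDerivAt (fun t => Real.exp (γ * t) * (G t - K / γ))
      (Real.exp (γ * t) * γ * (G t - K / γ) + Real.exp (γ * t) * G' t) t := by
    intro t
    have h1 : HasDerivAt (fun t => Real.exp (γ * t)) (Real.exp (γ * t) * γ) t := by
      simpa using ((hasDerivAt_id t).const_mul γ).exp
    exact h1.mul ((hG t).sub_const _)
  have hanti : AntitoneOn (fun t => Real.exp (γ * t) * (G t - K / γ)) (Set.Ici 0) := by
    refine antitoneOn_of_deriv_nonpos (convex_Ici 0)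
      (fun t _ => (hd t).continuousAt.continuousWithinAt)
      (fun t _ => (hd t).differentiableAt.differentiableWithinAt) ?_
    intro t ht
    rw [interior_Ici] at ht
    rw [(hd t).deriv]
    have h2 := hle t (le_of_lt ht)
    have : Real.exp (γ * t) * γ * (G t - K / γ) + Real.exp (γ * t) * G' t
        = Real.exp (γ * t) * (G' t - (-γ * G t + K)) := by
      field_simp; ring
    rw [this]
    exact mul_nonpos_of_nonneg_of_nonpos (Real.exp_pos _).le (by linarith)
  have hlim : Filter.Tendsto (fun t => Real.exp (γ * t)) Filter.atTop Filter.atTop :=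
    Real.tendsto_exp_atTop.comp (Filter.tendsto_id.const_mul_atTop hγ)
  filter_upwards [hlim.eventually_ge_atTop (G 0 - K / γ), Filter.eventually_ge_atTop 0] with t h1 h2
  have h3 := hanti (Set.mem_Ici.2 le_rfl) (Set.mem_Ici.2 h2) h2
  simp only [mul_zero, Real.exp_zero, one_mul] at h3
  have h4 : Real.exp (γ * t) * (G t - K / γ) ≤ Real.exp (γ * t) * 1 := by linarith
  have := le_of_mul_le_mul_left h4 (Real.exp_pos _)
  linarith

lemma young_aux {γ v w : ℝ} (hγ : 0 < γ) (hv : 0 ≤ v) (hw : 0 ≤ w) (p : ℕ) :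
    v ^ p * w ≤ γ / 2 * v ^ (p + 1) + (2 / γ) ^ p * w ^ (p + 1) := by
  rcases le_total w (γ / 2 * v) with h | h
  · have h1 : v ^ p * w ≤ v ^ p * (γ / 2 * v) := mul_le_mul_of_nonneg_left h (by positivity)
    have h2 : 0 ≤ (2 / γ) ^ p * w ^ (p + 1) := by positivity
    calc _ ≤ _ := h1
      _ = γ / 2 * v ^ (p + 1) := by ring
      _ ≤ _ := by linarith
  · have h0 : v ≤ 2 / γ * w := by
      rw [div_mul_eq_mul_div, le_div_iff₀ hγ]; linarith
    have h1 : v ^ p * w ≤ (2 / γ * w) ^ p * w := by gcongr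
    have h2 : 0 ≤ γ / 2 * v ^ (p + 1) := by positivity
    calc _ ≤ _ := h1
      _ = (2 / γ) ^ p * w ^ (p + 1) := by rw [mul_pow]; ring
      _ ≤ _ := by linarith

/-- crude Sobolev bound -/
lemma sob_aux {f1 f2 f1' f2' : ℝ → ℝ} (h1 : ∀ x, HasDerivAt f1 (f1' x) x)
    (h2 : ∀ x, HasDerivAt f2 (f2' x) x) (c1 : Continuous f1') (c2 : Continuous f2')
    {L : ℝ} (hL : 1 ≤ L) {x : ℝ} (hx : x ∈ Set.Icc 0 L) :
    f1 x ^ 2 + f2 x ^ 2 ≤ 2 * (∫ y in (0:ℝ)..L, (f1 y ^ 2 + f2 y ^ 2))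
      + ∫ y in (0:ℝ)..L, (f1' y ^ 2 + f2' y ^ 2) := by
  have k1 : Continuous f1 := continuous_iff_continuousAt.2 fun x => (h1 x).continuousAt
  have k2 : Continuous f2 := continuous_iff_continuousAt.2 fun x => (h2 x).continuousAt
  set F0 := ∫ y in (0:ℝ)..L, (f1 y ^ 2 + f2 y ^ 2)
  set F1 := ∫ y in (0:ℝ)..L, (f1' y ^ 2 + f2' y ^ 2)
  have cS : Continuous fun y => f1 y ^ 2 + f2 y ^ 2 := by fun_prop
  have cS' : Continuous fun y => f1' y ^ 2 + f2' y ^ 2 := by fun_prop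
  have hdiff : ∀ y ∈ Set.Icc 0 L,
      f1 x ^ 2 + f2 x ^ 2 ≤ f1 y ^ 2 + f2 y ^ 2 + (F0 + F1) := by
    intro y hy
    have hd : ∀ z, HasDerivAt (fun z => f1 z ^ 2 + f2 z ^ 2)
        (2 * f1 z * f1' z + 2 * f2 z * f2' z) z := by
      intro z
      have := ((h1 z).pow 2).add ((h2 z).pow 2)
      exact this.congr_deriv (by norm_num)
    have cd : Continuous fun z => 2 * f1 z * f1' z + 2 * f2 z * f2' z := by fun_prop
    have ftc := intervalIntegral.integral_eq_sub_of_hasDerivAt (a := y) (b := x)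
      (fun z _ => hd z) (cd.intervalIntegrable _ _)
    have hb : |∫ z in y..x, (2 * f1 z * f1' z + 2 * f2 z * f2' z)|
        ≤ ∫ z in (0:ℝ)..L, ((f1 z ^ 2 + f2 z ^ 2) + (f1' z ^ 2 + f2' z ^ 2)) := by
      rw [← Real.norm_eq_abs]
      refine (intervalIntegral.norm_integral_le_integral_norm_uIoc).trans ?_
      rw [intervalIntegral.integral_of_le (by linarith)]
      have hsub : Set.uIoc y x ⊆ Set.Ioc 0 L := by
        intro z hz
        rw [Set.mem_uIoc] at hz
        rcases hz with hz | hz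
        · exact ⟨lt_of_le_of_lt hy.1 hz.1, hz.2.trans hx.2⟩
        · exact ⟨lt_of_le_of_lt hx.1 hz.1, hz.2.trans hy.2⟩
      have ci : MeasureTheory.IntegrableOn
          (fun z => (f1 z ^ 2 + f2 z ^ 2) + (f1' z ^ 2 + f2' z ^ 2)) (Set.Ioc 0 L) :=
        ((cS.add cS').integrableOn_Icc).mono_set Set.Ioc_subset_Icc_self
      refine (MeasureTheory.setIntegral_mono_on ?_ (ci.mono_set hsub) measurableSet_uIoc ?_).trans
        (MeasureTheory.setIntegral_mono_set ci ?_ hsub.eventuallyLE)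
      · exact (cd.norm.integrableOn_Icc (a := 0) (b := L)).mono_set
          (hsub.trans Set.Ioc_subset_Icc_self)
      · intro z _
        rw [Real.norm_eq_abs, abs_le]
        constructor <;> nlinarith [sq_nonneg (f1 z - f1' z), sq_nonneg (f2 z - f2' z),
          sq_nonneg (f1 z + f1' z), sq_nonneg (f2 z + f2' z)]
      · exact Filter.Eventually.of_forall fun z => by positivity
    rw [intervalIntegral.integral_add (cS.intervalIntegrable _ _) (cS'.intervalIntegrable _ _),
      ftc] at hb
    have := (abs_le.1 hb).2
    linarith
  have hint : ∫ y in (0:ℝ)..L, (f1 x ^ 2 + f2 x ^ 2 - (F0 + F1)) ≤ F0 := by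
    refine intervalIntegral.integral_mono_on (by linarith) (by simp) (cS.intervalIntegrable _ _) ?_
    intro y hy
    linarith [hdiff y hy]
  rw [intervalIntegral.integral_const, sub_zero, smul_eq_mul] at hint
  have hF0 : 0 ≤ F0 := intervalIntegral.integral_nonneg (by linarith) fun y _ => by positivity
  by_cases hn : 0 ≤ f1 x ^ 2 + f2 x ^ 2 - (F0 + F1)
  · nlinarith
  · linarith

noncomputable def gdens (k : ℕ) (A B : ℝ × ℝ → ℝ) (q : ℝ × ℝ) : ℝ :=
  1 / 2 * (A q ^ 2 + B q ^ 2) + 1 / 2 * (pxd A q ^ 2 + pxd B q ^ 2)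
    + 1 / (2 * (k : ℝ) + 2) * (A q ^ 2 + B q ^ 2) ^ (k + 1)

lemma gdens_smooth (k : ℕ) {A B : ℝ × ℝ → ℝ} (hA : ContDiff ℝ (⊤ : ℕ∞) A)
    (hB : ContDiff ℝ (⊤ : ℕ∞) B) : ContDiff ℝ (⊤ : ℕ∞) (gdens k A B) := by
  have := pxd_smooth hA
  have := pxd_smooth hB
  unfold gdens
  fun_prop

lemma ptd_gdens (k : ℕ) {A B : ℝ × ℝ → ℝ} (hA : ContDiff ℝ (⊤ : ℕ∞) A)
    (hB : ContDiff ℝ (⊤ : ℕ∞) B) (t x : ℝ) :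
    ptd (gdens k A B) (t, x) =
      (1 + (A (t, x) ^ 2 + B (t, x) ^ 2) ^ k) *
        (A (t, x) * ptd A (t, x) + B (t, x) * ptd B (t, x))
      + pxd A (t, x) * pxd (ptd A) (t, x) + pxd B (t, x) * pxd (ptd B) (t, x) := by
  have h1 := ptd_hasDeriv (gdens_smooth k hA hB) t x
  have a := ptd_hasDeriv hA t x
  have b := ptd_hasDeriv hB t x
  have ax := ptd_hasDeriv (pxd_smooth hA) t x
  have bx := ptd_hasDeriv (pxd_smooth hB) t x
  rw [ptd_pxd hA] at ax
  rw [ptd_pxd hB] at bx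
  have S := (a.pow 2).add (b.pow 2)
  have h2 := ((S.const_mul (1 / 2)).add (((ax.pow 2).add (bx.pow 2)).const_mul (1 / 2))).add
    ((S.pow (k + 1)).const_mul (1 / (2 * (k : ℝ) + 2)))
  have := h1.unique h2
  rw [this]
  have hk : (2 * (k : ℝ) + 2) ≠ 0 := by positivity
  simp only [Pi.add_apply, Pi.pow_apply, Nat.add_sub_cancel]
  push_cast
  field_simp
  ring

lemma pointwise_R {γ : ℝ} (hγ : 0 < γ) (k : ℕ) (a b ax bx f1 f2 d1 d2 : ℝ) :
    -γ * (a ^ 2 + b ^ 2 + (a ^ 2 + b ^ 2) ^ (k + 1) + ax ^ 2 + bx ^ 2)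
      + (a * f2 - b * f1) * (1 + (a ^ 2 + b ^ 2) ^ k) + (ax * d2 - bx * d1)
    ≤ -γ * (1 / 2 * (a ^ 2 + b ^ 2) + 1 / 2 * (ax ^ 2 + bx ^ 2)
        + 1 / (2 * (k : ℝ) + 2) * (a ^ 2 + b ^ 2) ^ (k + 1))
      + (1 / (2 * γ) * (f1 ^ 2 + f2 ^ 2) + 1 / (2 * γ) * (d1 ^ 2 + d2 ^ 2)
        + (2 / γ) ^ (2 * k + 1) * (f1 ^ 2 + f2 ^ 2) ^ (k + 1)) := by
  have h1 : ∀ c d e g : ℝ, c * e - d * g ≤ γ / 2 * (c ^ 2 + d ^ 2) + 1 / (2 * γ) * (g ^ 2 + e ^ 2) := by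
    intro c d e g
    have : γ / 2 * (c ^ 2 + d ^ 2) + 1 / (2 * γ) * (g ^ 2 + e ^ 2) - (c * e - d * g)
      = 1 / (2 * γ) * ((γ * c - e) ^ 2 + (γ * d + g) ^ 2) := by field_simp; ring
    have h : 0 ≤ 1 / (2 * γ) * ((γ * c - e) ^ 2 + (γ * d + g) ^ 2) := by positivity
    linarith
  have h2 := h1 a b f2 f1
  have h3 := h1 ax bx d2 d1
  have hS : 0 ≤ a ^ 2 + b ^ 2 := by positivity
  have hF : 0 ≤ f1 ^ 2 + f2 ^ 2 := by positivity
  have h4 : (a * f2 - b * f1) * (a ^ 2 + b ^ 2) ^ k ≤ γ / 2 * (a ^ 2 + b ^ 2) ^ (k + 1)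
      + (2 / γ) ^ (2 * k + 1) * (f1 ^ 2 + f2 ^ 2) ^ (k + 1) := by
    have hy := young_aux hγ (Real.sqrt_nonneg (a ^ 2 + b ^ 2)) (Real.sqrt_nonneg (f1 ^ 2 + f2 ^ 2))
      (2 * k + 1)
    have e1 : ∀ z : ℝ, 0 ≤ z → √z ^ (2 * k + 1 + 1) = z ^ (k + 1) := by
      intro z hz
      rw [show 2 * k + 1 + 1 = 2 * (k + 1) by ring, pow_mul, Real.sq_sqrt hz]
    have e2 : √(a ^ 2 + b ^ 2) ^ (2 * k + 1) = (a ^ 2 + b ^ 2) ^ k * √(a ^ 2 + b ^ 2) := by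
      rw [pow_succ, pow_mul, Real.sq_sqrt hS]
    rw [e1 _ hS, e1 _ hF, e2] at hy
    refine le_trans ?_ hy
    have h5 : a * f2 - b * f1 ≤ √(a ^ 2 + b ^ 2) * √(f1 ^ 2 + f2 ^ 2) := by
      rw [← Real.sqrt_mul hS]
      apply Real.le_sqrt_of_sq_le
      nlinarith [sq_nonneg (a * f1 + b * f2)]
    calc _ ≤ (√(a ^ 2 + b ^ 2) * √(f1 ^ 2 + f2 ^ 2)) * (a ^ 2 + b ^ 2) ^ k := by gcongr
      _ = _ := by ring
  have h6 : γ * (1 / (2 * (k : ℝ) + 2) * (a ^ 2 + b ^ 2) ^ (k + 1))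
      ≤ γ * (1 / 2 * (a ^ 2 + b ^ 2) ^ (k + 1)) := by
    gcongr
    have : (0 : ℝ) ≤ k := by positivity
    linarith
  nlinarith [h2, h3, h4, h6]

lemma energy_ineq {γ : ℝ} (hγ : 0 < γ) (k : ℕ) {A B : ℝ × ℝ → ℝ}
    (hA : ContDiff ℝ (⊤ : ℕ∞) A) (hB : ContDiff ℝ (⊤ : ℕ∞) B)
    {f1 f2 d1 d2 : ℝ → ℝ} (h1 : ∀ x, HasDerivAt f1 (d1 x) x)
    (h2 : ∀ x, HasDerivAt f2 (d2 x) x) (c1 : Continuous d1) (c2 : Continuous d2)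
    {L : ℝ} (hL : 1 ≤ L)
    (pA : ∀ t x, A (t, x + L) = A (t, x)) (pB : ∀ t x, B (t, x + L) = B (t, x))
    (p1 : ∀ x, f1 (x + L) = f1 x) (p2 : ∀ x, f2 (x + L) = f2 x) (t : ℝ)
    (eA : ∀ x, ptd A (t, x) = - pxd (pxd B) (t, x) + (A (t, x) ^ 2 + B (t, x) ^ 2) ^ k * B (t, x)
      - γ * A (t, x) + f2 x)
    (eB : ∀ x, ptd B (t, x) = pxd (pxd A) (t, x) - (A (t, x) ^ 2 + B (t, x) ^ 2) ^ k * A (t, x)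
      - γ * B (t, x) - f1 x)
    {F0 F1 : ℝ} (hF0 : F0 = ∫ x in (0:ℝ)..L, (f1 x ^ 2 + f2 x ^ 2))
    (hF1 : F1 = ∫ x in (0:ℝ)..L, (d1 x ^ 2 + d2 x ^ 2)) :
    (∫ x in (0:ℝ)..L, ptd (gdens k A B) (t, x)) ≤
      -γ * (∫ x in (0:ℝ)..L, gdens k A B (t, x))
      + (1 / (2 * γ) * F0 + 1 / (2 * γ) * F1
        + L * ((2 / γ) ^ (2 * k + 1) * (2 * F0 + F1) ^ (k + 1))) := by
  have k1 : Continuous f1 := continuous_iff_continuousAt.2 fun x => (h1 x).continuousAt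
  have k2 : Continuous f2 := continuous_iff_continuousAt.2 fun x => (h2 x).continuousAt
  set Φ : ℝ → ℝ := fun x => pxd A (t, x) * ptd A (t, x) + pxd B (t, x) * ptd B (t, x)
    + (pxd A (t, x) * B (t, x) - pxd B (t, x) * A (t, x))
    + γ * (pxd A (t, x) * A (t, x) + pxd B (t, x) * B (t, x))
    - (pxd A (t, x) * f2 x - pxd B (t, x) * f1 x) with hΦ
  set Φ' : ℝ → ℝ := fun x =>
    (pxd (pxd A) (t, x) * ptd A (t, x) + pxd A (t, x) * pxd (ptd A) (t, x)
      + (pxd (pxd B) (t, x) * ptd B (t, x) + pxd B (t, x) * pxd (ptd B) (t, x)))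
    + ((pxd (pxd A) (t, x) * B (t, x) + pxd A (t, x) * pxd B (t, x))
      - (pxd (pxd B) (t, x) * A (t, x) + pxd B (t, x) * pxd A (t, x)))
    + γ * ((pxd (pxd A) (t, x) * A (t, x) + pxd A (t, x) * pxd A (t, x))
      + (pxd (pxd B) (t, x) * B (t, x) + pxd B (t, x) * pxd B (t, x)))
    - ((pxd (pxd A) (t, x) * f2 x + pxd A (t, x) * d2 x)
      - (pxd (pxd B) (t, x) * f1 x + pxd B (t, x) * d1 x)) with hΦ'
  have hd : ∀ x, HasDerivAt Φ (Φ' x) x := by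
    intro x
    have a := pxd_hasDeriv hA t x
    have b := pxd_hasDeriv hB t x
    have ax := pxd_hasDeriv (pxd_smooth hA) t x
    have bx := pxd_hasDeriv (pxd_smooth hB) t x
    have at' := pxd_hasDeriv (ptd_smooth hA) t x
    have bt' := pxd_hasDeriv (ptd_smooth hB) t x
    exact ((((ax.mul at').add (bx.mul bt')).add ((ax.mul b).sub (bx.mul a))).add
      (((ax.mul a).add (bx.mul b)).const_mul γ)).sub ((ax.mul (h2 x)).sub (bx.mul (h1 x)))
  have hsec : ∀ {g : ℝ × ℝ → ℝ}, ContDiff ℝ (⊤ : ℕ∞) g → Continuous fun x => g (t, x) :=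
    fun hg => hg.continuous.comp (by fun_prop)
  have sA := hsec hA
  have sB := hsec hB
  have sAx := hsec (pxd_smooth hA)
  have sBx := hsec (pxd_smooth hB)
  have sAxx := hsec (pxd_smooth (pxd_smooth hA))
  have sBxx := hsec (pxd_smooth (pxd_smooth hB))
  have sAt := hsec (ptd_smooth hA)
  have sBt := hsec (ptd_smooth hB)
  have sAtx := hsec (pxd_smooth (ptd_smooth hA))
  have sBtx := hsec (pxd_smooth (ptd_smooth hB))
  have sg := hsec (gdens_smooth k hA hB)
  have sgt := hsec (ptd_smooth (gdens_smooth k hA hB))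
  have cΦ' : Continuous Φ' := by rw [hΦ']; fun_prop
  have hzero : ∫ x in (0:ℝ)..L, Φ' x = 0 := by
    rw [intervalIntegral.integral_eq_sub_of_hasDerivAt (fun x _ => hd x)
      (cΦ'.intervalIntegrable _ _), hΦ]
    have e1 := pxd_per L pA t 0
    have e2 := pxd_per L pB t 0
    have e3 := ptd_per L pA t 0
    have e4 := ptd_per L pB t 0
    have e5 := pA t 0
    have e6 := pB t 0
    have e7 := p1 0
    have e8 := p2 0
    rw [zero_add] at e1 e2 e3 e4 e5 e6 e7 e8
    simp only [e1, e2, e3, e4, e5, e6, e7, e8]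
    ring
  set P : ℝ := (2 / γ) ^ (2 * k + 1) * (2 * F0 + F1) ^ (k + 1) with hP
  have hpt : ∀ x ∈ Set.Icc 0 L, ptd (gdens k A B) (t, x) ≤ Φ' x + (-γ * gdens k A B (t, x)
      + (1 / (2 * γ) * (f1 x ^ 2 + f2 x ^ 2) + 1 / (2 * γ) * (d1 x ^ 2 + d2 x ^ 2) + P)) := by
    intro x hx
    have hR := pointwise_R hγ k (A (t, x)) (B (t, x)) (pxd A (t, x)) (pxd B (t, x))
      (f1 x) (f2 x) (d1 x) (d2 x)
    have hid : ptd (gdens k A B) (t, x) = Φ' x +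
        (-γ * (A (t, x) ^ 2 + B (t, x) ^ 2 + (A (t, x) ^ 2 + B (t, x) ^ 2) ^ (k + 1)
          + pxd A (t, x) ^ 2 + pxd B (t, x) ^ 2)
        + (A (t, x) * f2 x - B (t, x) * f1 x) * (1 + (A (t, x) ^ 2 + B (t, x) ^ 2) ^ k)
        + (pxd A (t, x) * d2 x - pxd B (t, x) * d1 x)) := by
      rw [ptd_gdens k hA hB, hΦ']
      simp only []
      rw [eA, eB, pow_succ _ k]
      generalize (A (t, x) ^ 2 + B (t, x) ^ 2) ^ k = N
      ring
    have hs := sob_aux h1 h2 c1 c2 hL hx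
    rw [← hF0, ← hF1] at hs
    have hs2 : (2 / γ) ^ (2 * k + 1) * (f1 x ^ 2 + f2 x ^ 2) ^ (k + 1) ≤ P := by
      rw [hP]; gcongr
    rw [hid]
    unfold gdens
    linarith
  have i0 : Continuous fun x => f1 x ^ 2 + f2 x ^ 2 := by fun_prop
  have i1 : Continuous fun x => d1 x ^ 2 + d2 x ^ 2 := by fun_prop
  have hmono := intervalIntegral.integral_mono_on (μ := MeasureTheory.volume) (by linarith : (0:ℝ) ≤ L)
    (sgt.intervalIntegrable _ _)
    (Continuous.intervalIntegrable (by fun_prop) _ _) hpt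
  refine hmono.trans (le_of_eq ?_)
  have I : ∀ {g : ℝ → ℝ}, Continuous g → IntervalIntegrable g MeasureTheory.volume 0 L :=
    fun hg => hg.intervalIntegrable _ _
  rw [intervalIntegral.integral_add (I cΦ') (I (by fun_prop)),
    intervalIntegral.integral_add (I (by fun_prop)) (I (by fun_prop)),
    intervalIntegral.integral_add (I (by fun_prop)) (I (by fun_prop)),
    intervalIntegral.integral_add (I (by fun_prop)) (I (by fun_prop)),
    intervalIntegral.integral_const_mul, intervalIntegral.integral_const_mul,
    intervalIntegral.integral_const_mul, intervalIntegral.integral_const, hzero, ← hF0, ← hF1]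
  simp

/-- Absorbing set in `H¹(𝕋)` for the periodic forced–damped defocusing p-NLS: there is a
constant depending only on `p`, `γ`, `∫|f|²` and `∫|f'|²` bounding
`limsup_{t→∞} (½∫|∂ₓu|² + (1/(p+1))∫|u|^{p+1})` and hence
`limsup_{t→∞} (∫|u|² + ∫|∂ₓu|²)`, for every `f` and every global classical solution `u`. -/
theorem stmt13 (p : ℕ) (hp : Odd p) (hp5 : 5 ≤ p) (γ : ℝ) (hγ : 0 < γ) :
    ∃ C : ℝ → ℝ → ℝ,
      ∀ f : ℝ → ℂ, ContDiff ℝ 1 f → Function.Periodic f (2 * Real.pi) →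
      ∀ u : ℝ → ℝ → ℂ, ContDiff ℝ (⊤ : ℕ∞) (fun q : ℝ × ℝ => u q.1 q.2) →
        (∀ t x : ℝ, u t (x + 2 * Real.pi) = u t x) →
        (∀ t : ℝ, 0 ≤ t → ∀ x : ℝ,
          Complex.I * deriv (fun r => u r x) t
            + deriv (deriv (fun y => u t y)) x
            - (‖u t x‖ : ℂ) ^ (p - 1) * u t x
            + Complex.I * (γ : ℂ) * u t x = f x) →
        (Filter.limsup (fun t : ℝ =>
              (1/2) * (∫ x in (0:ℝ)..(2 * Real.pi), ‖deriv (fun y => u t y) x‖^2)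
              + (1/((p:ℝ) + 1)) * ∫ x in (0:ℝ)..(2 * Real.pi), ‖u t x‖^(p+1)) Filter.atTop
            ≤ C (∫ x in (0:ℝ)..(2 * Real.pi), ‖f x‖^2)
                (∫ x in (0:ℝ)..(2 * Real.pi), ‖deriv f x‖^2))
        ∧ (Filter.limsup (fun t : ℝ =>
              (∫ x in (0:ℝ)..(2 * Real.pi), ‖u t x‖^2)
              + ∫ x in (0:ℝ)..(2 * Real.pi), ‖deriv (fun y => u t y) x‖^2) Filter.atTop
            ≤ C (∫ x in (0:ℝ)..(2 * Real.pi), ‖f x‖^2)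
                (∫ x in (0:ℝ)..(2 * Real.pi), ‖deriv f x‖^2)) := by
  obtain ⟨k, rfl⟩ := hp
  refine ⟨fun F0 F1 => 2 * ((1 / (2 * γ) * F0 + 1 / (2 * γ) * F1
        + (2 * Real.pi) * ((2 / γ) ^ (2 * k + 1) * (2 * F0 + F1) ^ (k + 1))) / γ + 1), ?_⟩
  intro f hf pf u hu pu heq
  have hL : 1 ≤ 2 * Real.pi := by linarith [Real.pi_gt_three]
  set A : ℝ × ℝ → ℝ := fun q => (u q.1 q.2).re with hAdef
  set B : ℝ × ℝ → ℝ := fun q => (u q.1 q.2).im with hBdef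
  have hA : ContDiff ℝ (⊤ : ℕ∞) A := Complex.reCLM.contDiff.comp hu
  have hB : ContDiff ℝ (⊤ : ℕ∞) B := Complex.imCLM.contDiff.comp hu
  have huAB : ∀ t x, u t x = (A (t, x) : ℂ) + (B (t, x) : ℂ) * Complex.I :=
    fun t x => (Complex.re_add_im _).symm
  have mk : ∀ {g h : ℝ → ℝ} {g' h' x : ℝ}, HasDerivAt g g' x → HasDerivAt h h' x →
      HasDerivAt (fun y => (g y : ℂ) + (h y : ℂ) * Complex.I) ((g' : ℂ) + (h' : ℂ) * Complex.I) x :=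
    fun hg hh => hg.ofReal_comp.add (hh.ofReal_comp.mul_const _)
  have hux : ∀ t, deriv (fun y => u t y)
      = fun x => (pxd A (t, x) : ℂ) + (pxd B (t, x) : ℂ) * Complex.I := by
    intro t
    funext x
    simp only [huAB]
    exact (mk (pxd_hasDeriv hA t x) (pxd_hasDeriv hB t x)).deriv
  have huxx : ∀ t x, deriv (deriv (fun y => u t y)) x
      = (pxd (pxd A) (t, x) : ℂ) + (pxd (pxd B) (t, x) : ℂ) * Complex.I := by
    intro t x
    rw [hux]
    exact (mk (pxd_hasDeriv (pxd_smooth hA) t x) (pxd_hasDeriv (pxd_smooth hB) t x)).deriv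
  have hut : ∀ t x, deriv (fun r => u r x) t
      = (ptd A (t, x) : ℂ) + (ptd B (t, x) : ℂ) * Complex.I := by
    intro t x
    simp only [huAB]
    exact (mk (ptd_hasDeriv hA t x) (ptd_hasDeriv hB t x)).deriv
  have nsq : ∀ a b : ℝ, ‖(a : ℂ) + (b : ℂ) * Complex.I‖ ^ 2 = a ^ 2 + b ^ 2 := by
    intro a b
    rw [Complex.sq_norm, Complex.normSq_apply]; simp; ring
  have nu : ∀ t x, ‖u t x‖ ^ 2 = A (t, x) ^ 2 + B (t, x) ^ 2 := by
    intro t x; rw [huAB, nsq]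
  have nux : ∀ t x, ‖deriv (fun y => u t y) x‖ ^ 2 = pxd A (t, x) ^ 2 + pxd B (t, x) ^ 2 := by
    intro t x; rw [hux, nsq]
  have nup : ∀ t x, ‖u t x‖ ^ (2 * k + 1 + 1) = (A (t, x) ^ 2 + B (t, x) ^ 2) ^ (k + 1) := by
    intro t x
    rw [← nu, ← pow_mul]; ring_nf
  have hfd : ∀ x, HasDerivAt f (deriv f x) x :=
    fun x => (hf.differentiable (by simp) x).hasDerivAt
  have cfd : Continuous (deriv f) := hf.continuous_deriv (by simp)
  have h1 : ∀ x, HasDerivAt (fun x => (f x).re) (deriv f x).re x :=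
    fun x => Complex.reCLM.hasFDerivAt.comp_hasDerivAt x (hfd x)
  have h2 : ∀ x, HasDerivAt (fun x => (f x).im) (deriv f x).im x :=
    fun x => Complex.imCLM.hasFDerivAt.comp_hasDerivAt x (hfd x)
  have nf : ∀ x, ‖f x‖ ^ 2 = (f x).re ^ 2 + (f x).im ^ 2 := by
    intro x; rw [Complex.sq_norm, Complex.normSq_apply]; ring
  have nfd : ∀ x, ‖deriv f x‖ ^ 2 = (deriv f x).re ^ 2 + (deriv f x).im ^ 2 := by
    intro x; rw [Complex.sq_norm, Complex.normSq_apply]; ring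
  have heq' : ∀ t, 0 ≤ t → ∀ x, (ptd A (t, x) = - pxd (pxd B) (t, x)
      + (A (t, x) ^ 2 + B (t, x) ^ 2) ^ k * B (t, x) - γ * A (t, x) + (f x).im) ∧
      (ptd B (t, x) = pxd (pxd A) (t, x) - (A (t, x) ^ 2 + B (t, x) ^ 2) ^ k * A (t, x)
      - γ * B (t, x) - (f x).re) := by
    intro t ht x
    have h := heq t ht x
    have hn : (‖u t x‖ : ℂ) ^ (2 * k + 1 - 1)
        = (((A (t, x) ^ 2 + B (t, x) ^ 2) ^ k : ℝ) : ℂ) := by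
      rw [Nat.add_sub_cancel, ← nu, ← pow_mul]; push_cast; rfl
    rw [hn, hut, huxx, huAB t x] at h
    generalize (A (t, x) ^ 2 + B (t, x) ^ 2) ^ k = N at h ⊢
    have hre := congrArg Complex.re h
    have him := congrArg Complex.im h
    simp at hre him
    constructor <;> linarith
  set F0 := ∫ x in (0:ℝ)..(2 * Real.pi), ‖f x‖ ^ 2 with hF0
  set F1 := ∫ x in (0:ℝ)..(2 * Real.pi), ‖deriv f x‖ ^ 2 with hF1
  simp only [nf] at hF0
  simp only [nfd] at hF1
  have hev := gronwall_ev hγ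
    (fun t => integral_hasDeriv (gdens_smooth k hA hB) 0 (2 * Real.pi) t)
    (fun t ht => energy_ineq hγ k hA hB h1 h2 (Complex.continuous_re.comp cfd)
      (Complex.continuous_im.comp cfd) hL
      (fun t x => by simp only [hAdef, pu]) (fun t x => by simp only [hBdef, pu])
      (fun x => by rw [pf x]) (fun x => by rw [pf x]) t
      (fun x => (heq' t ht x).1) (fun x => (heq' t ht x).2) hF0 hF1)
  set K := (1 / (2 * γ) * F0 + 1 / (2 * γ) * F1
        + (2 * Real.pi) * ((2 / γ) ^ (2 * k + 1) * (2 * F0 + F1) ^ (k + 1))) with hK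
  have hLp : (0:ℝ) ≤ 2 * Real.pi := by linarith
  have n0 : ∀ t, 0 ≤ ∫ x in (0:ℝ)..(2 * Real.pi), ‖u t x‖ ^ 2 := fun t =>
    intervalIntegral.integral_nonneg hLp fun x _ => by positivity
  have n1 : ∀ t, 0 ≤ ∫ x in (0:ℝ)..(2 * Real.pi), ‖deriv (fun y => u t y) x‖ ^ 2 := fun t =>
    intervalIntegral.integral_nonneg hLp fun x _ => by positivity
  have n2 : ∀ t, 0 ≤ (1 / (((2 * k + 1 : ℕ) : ℝ) + 1)) *
      ∫ x in (0:ℝ)..(2 * Real.pi), ‖u t x‖ ^ (2 * k + 1 + 1) := fun t =>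
    mul_nonneg (by positivity)
      (intervalIntegral.integral_nonneg hLp fun x _ => by positivity)
  have hG : ∀ t, ∫ x in (0:ℝ)..(2 * Real.pi), gdens k A B (t, x)
      = 1 / 2 * (∫ x in (0:ℝ)..(2 * Real.pi), ‖u t x‖ ^ 2)
        + 1 / 2 * (∫ x in (0:ℝ)..(2 * Real.pi), ‖deriv (fun y => u t y) x‖ ^ 2)
        + (1 / (((2 * k + 1 : ℕ) : ℝ) + 1)) *
          ∫ x in (0:ℝ)..(2 * Real.pi), ‖u t x‖ ^ (2 * k + 1 + 1) := by
    intro t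
    have hsec : ∀ {g : ℝ × ℝ → ℝ}, ContDiff ℝ (⊤ : ℕ∞) g → Continuous fun x => g (t, x) :=
      fun hg => hg.continuous.comp (by fun_prop)
    have sA := hsec hA
    have sB := hsec hB
    have sAx := hsec (pxd_smooth hA)
    have sBx := hsec (pxd_smooth hB)
    have I : ∀ {g : ℝ → ℝ}, Continuous g →
        IntervalIntegrable g MeasureTheory.volume 0 (2 * Real.pi) :=
      fun hg => hg.intervalIntegrable _ _
    simp only [nu, nux, nup, gdens]
    rw [intervalIntegral.integral_add (I (by fun_prop)) (I (by fun_prop)),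
      intervalIntegral.integral_add (I (by fun_prop)) (I (by fun_prop)),
      intervalIntegral.integral_const_mul, intervalIntegral.integral_const_mul,
      intervalIntegral.integral_const_mul]
    congr 3
    push_cast; ring
  have cob : ∀ {h : ℝ → ℝ}, (∀ t, 0 ≤ h t) →
      Filter.IsCoboundedUnder (· ≤ ·) Filter.atTop h := fun hh =>
    Filter.isCoboundedUnder_le_of_le Filter.atTop (x := 0) hh
  constructor
  · refine Filter.limsup_le_of_le (cob fun t => ?_) ?_
    · linarith [n1 t, n2 t]
    · filter_upwards [hev] with t ht
      rw [hG] at ht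
      linarith [n0 t, n1 t, n2 t]
  · refine Filter.limsup_le_of_le (cob fun t => ?_) ?_
    · linarith [n0 t, n1 t]
    · filter_upwards [hev] with t ht
      rw [hG] at ht
      linarith [n0 t, n1 t, n2 t]
end
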